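/- arXiv:2002.09682 — 2 statements merged into one kernel-verified Lean document; each statement's English description precedes it below -/
import Mathlib

section
/- The hypotheses obs reduce to exch ∪ contr': the map r sending each letter a ∈ Σ to itself and each propositional term p ∈ T_BA to the sum of all atoms α with α ≦_BA p (where α ≦_BA p means α ∨ p ≡_BA p) is a reduction from obs to exch ∪ contr'. -/
namespace CKAH

open Classical

/-! ### Labelled posets and pomsets -/

/-- A labelled poset over alphabet `A`: a finite carrier with a partial order and labelling. -/
structure LPoset (A : Type) : Type 1 where
  carrier : Type
  [fin : Fintype carrier]
  [ord : PartialOrder carrier]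
  lab : carrier → A

attribute [instance] LPoset.fin LPoset.ord

/-- Isomorphism of labelled posets: an order isomorphism preserving labels. -/
def LPoset.Iso {A : Type} (u v : LPoset A) : Prop :=
  ∃ e : u.carrier ≃o v.carrier, ∀ x, v.lab (e x) = u.lab x

theorem LPoset.iso_equivalence (A : Type) : Equivalence (LPoset.Iso (A := A)) where
  refl u := ⟨OrderIso.refl _, fun _ => rfl⟩
  symm := by
    rintro u v ⟨e, he⟩
    exact ⟨e.symm, fun x => by rw [← he (e.symm x), OrderIso.apply_symm_apply]⟩
  trans := by
    rintro u v w ⟨e, he⟩ ⟨f, hf⟩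
    exact ⟨e.trans f, fun x => by rw [OrderIso.trans_apply, hf, he]⟩

instance pomSetoid (A : Type) : Setoid (LPoset A) := ⟨LPoset.Iso, LPoset.iso_equivalence A⟩

/-- A pomset is an isomorphism class of labelled posets. -/
def Pomset (A : Type) : Type 1 := Quotient (pomSetoid A)

/-- Sequential composition of labelled posets: disjoint union, everything on the left
below everything on the right (lexicographic sum order). -/
def LPoset.seqL {A : Type} (u v : LPoset A) : LPoset A where
  carrier := u.carrier ⊕ₗ v.carrier
  fin := inferInstanceAs (Fintype (u.carrier ⊕ v.carrier))
  lab := fun x => Sum.elim u.lab v.lab (ofLex x)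

/-- Parallel composition of labelled posets: disjoint union with no cross ordering. -/
def LPoset.parL {A : Type} (u v : LPoset A) : LPoset A where
  carrier := u.carrier ⊕ v.carrier
  lab := Sum.elim u.lab v.lab

def Pomset.seq {A : Type} : Pomset A → Pomset A → Pomset A :=
  Quotient.map₂ LPoset.seqL (by
    rintro u₁ u₂ ⟨e, he⟩ v₁ v₂ ⟨f, hf⟩
    refine ⟨(RelIso.sumLexCongr e f :
      (u₁.carrier ⊕ₗ v₁.carrier) ≃o (u₂.carrier ⊕ₗ v₂.carrier)), ?_⟩
    rintro (x | x)
    · exact he x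
    · exact hf x)

/-- Order isomorphism between disjoint-union orders, from component isomorphisms. -/
def sumOrderIso {α β γ δ : Type} [PartialOrder α] [PartialOrder β] [PartialOrder γ]
    [PartialOrder δ] (e : α ≃o γ) (f : β ≃o δ) : (α ⊕ β) ≃o (γ ⊕ δ) where
  toEquiv := Equiv.sumCongr e.toEquiv f.toEquiv
  map_rel_iff' := by
    rintro (x | x) (y | y) <;> simp [Sum.le_def, e.le_iff_le, f.le_iff_le]

def Pomset.par {A : Type} : Pomset A → Pomset A → Pomset A :=
  Quotient.map₂ LPoset.parL (by
    rintro u₁ u₂ ⟨e, he⟩ v₁ v₂ ⟨f, hf⟩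
    refine ⟨sumOrderIso e f, ?_⟩
    rintro (x | x)
    · exact he x
    · exact hf x)

def LPoset.emptyL (A : Type) : LPoset A := { carrier := Fin 0, lab := fun x => x.elim0 }

def LPoset.singleL {A : Type} (a : A) : LPoset A := { carrier := PUnit, lab := fun _ => a }

/-- The empty pomset `1`. -/
def Pomset.empty (A : Type) : Pomset A := ⟦LPoset.emptyL A⟧

/-- The single-letter pomset. -/
def Pomset.single {A : Type} (a : A) : Pomset A := ⟦LPoset.singleL a⟧

/-- Subsumption on labelled posets: `u ⊑ v` iff there is a label-preserving
order-preserving bijection from the carrier of `v` to that of `u`. -/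
def LPoset.subL {A : Type} (u v : LPoset A) : Prop :=
  ∃ h : v.carrier ≃ u.carrier,
    (∀ x, u.lab (h x) = v.lab x) ∧ ∀ x y : v.carrier, x ≤ y → h x ≤ h y

/-- Subsumption of pomsets: `Pomset.sub U V` means `U ⊑ V`. -/
def Pomset.sub {A : Type} : Pomset A → Pomset A → Prop :=
  Quotient.lift₂ LPoset.subL (by
    rintro u₁ v₁ u₂ v₂ ⟨e, he⟩ ⟨f, hf⟩
    refine propext ⟨?_, ?_⟩
    · rintro ⟨h, hl, hm⟩
      refine ⟨(f.toEquiv.symm.trans h).trans e.toEquiv, fun x => ?_, fun x y hxy => ?_⟩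
      · show u₂.lab (e (h (f.symm x))) = v₂.lab x
        rw [he, hl, ← hf (f.symm x), OrderIso.apply_symm_apply]
      · simp only [Equiv.trans_apply]
        exact e.le_iff_le.mpr (hm _ _ (f.symm.le_iff_le.mpr hxy))
    · rintro ⟨h, hl, hm⟩
      refine ⟨(f.toEquiv.trans h).trans e.toEquiv.symm, fun x => ?_, fun x y hxy => ?_⟩
      · show u₁.lab (e.symm (h (f x))) = v₁.lab x
        rw [← he (e.symm (h (f x))), OrderIso.apply_symm_apply, hl, hf]
      · simp only [Equiv.trans_apply]
        exact e.symm.le_iff_le.mpr (hm _ _ (f.le_iff_le.mpr hxy)))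

def LPoset.isWordL {A : Type} (u : LPoset A) : Prop := ∀ x y : u.carrier, x ≤ y ∨ y ≤ x

/-- A pomset is a word when it is totally ordered. -/
def Pomset.IsWord {A : Type} : Pomset A → Prop :=
  Quotient.lift LPoset.isWordL (by
    rintro u v ⟨e, -⟩
    refine propext ⟨fun h x y => ?_, fun h x y => ?_⟩
    · rcases h (e.symm x) (e.symm y) with h' | h'
      · exact Or.inl (e.symm.le_iff_le.mp h')
      · exact Or.inr (e.symm.le_iff_le.mp h')
    · rcases h (e x) (e y) with h' | h'
      · exact Or.inl (e.le_iff_le.mp h')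
      · exact Or.inr (e.le_iff_le.mp h'))

def LPoset.mapL {A B : Type} (f : A → B) (u : LPoset A) : LPoset B :=
  { carrier := u.carrier, lab := f ∘ u.lab }

/-- Relabelling of pomsets along a function on letters. -/
def Pomset.map {A B : Type} (f : A → B) : Pomset A → Pomset B :=
  Quotient.map (LPoset.mapL f)
    (by rintro u v ⟨e, he⟩; exact ⟨e, fun x => congrArg f (he x)⟩)

def LPoset.overL {A : Type} (Γ : Set A) (u : LPoset A) : Prop := ∀ x, u.lab x ∈ Γ

/-- All labels of the pomset belong to `Γ`. -/
def Pomset.Over {A : Type} (Γ : Set A) : Pomset A → Prop :=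
  Quotient.lift (LPoset.overL Γ) (by
    rintro u v ⟨e, he⟩
    refine propext ⟨fun h x => ?_, fun h x => ?_⟩
    · have h2 := he (e.symm x)
      rw [OrderIso.apply_symm_apply] at h2
      rw [h2]; exact h _
    · rw [← he x]; exact h _)

/-- Series-parallel pomsets. -/
inductive Pomset.IsSP {A : Type} : Pomset A → Prop
  | empty : Pomset.IsSP (Pomset.empty A)
  | single (a : A) : Pomset.IsSP (Pomset.single a)
  | seq {U V : Pomset A} : Pomset.IsSP U → Pomset.IsSP V → Pomset.IsSP (Pomset.seq U V)
  | par {U V : Pomset A} : Pomset.IsSP U → Pomset.IsSP V → Pomset.IsSP (Pomset.par U V)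

def SPset (A : Type) : Set (Pomset A) := {U | U.IsSP}

/-! ### Pomset contexts -/

/-- Contexts are pomsets over `Option A`, where `none` plays the role of `*`.
`uniqueStarL` says there is exactly one `*`-labelled node. -/
def LPoset.uniqueStarL {A : Type} (c : LPoset (Option A)) : Prop := ∃! x, c.lab x = none

theorem LPoset.uniqueStarL_congr {A : Type} {u v : LPoset (Option A)}
    (e : u.carrier ≃o v.carrier) (he : ∀ x, v.lab (e x) = u.lab x) :
    u.uniqueStarL ↔ v.uniqueStarL := by
  constructor
  · rintro ⟨x, hx, hux⟩
    refine ⟨e x, show v.lab (e x) = none by rw [he]; exact hx, fun y hy => ?_⟩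
    have h2 := he (e.symm y)
    rw [OrderIso.apply_symm_apply] at h2
    have h3 : e.symm y = x := hux _ (h2.symm.trans hy)
    rw [← h3, OrderIso.apply_symm_apply]
  · rintro ⟨x, hx, hvx⟩
    refine ⟨e.symm x, ?_, fun y hy => ?_⟩
    · show u.lab (e.symm x) = none
      have h2 := he (e.symm x)
      rw [OrderIso.apply_symm_apply] at h2
      rw [← h2]; exact hx
    · have h3 : e y = x := hvx _ (show v.lab (e y) = none by rw [he]; exact hy)
      rw [← h3, OrderIso.symm_apply_apply]

/-- A pomset context: exactly one node labelled `*`. -/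
def Pomset.IsCtx {A : Type} : Pomset (Option A) → Prop :=
  Quotient.lift LPoset.uniqueStarL
    (fun _ _ h => propext (LPoset.uniqueStarL_congr h.choose h.choose_spec))

/-- Series-parallel pomset contexts. -/
def Pomset.IsSPCtx {A : Type} (C : Pomset (Option A)) : Prop := C.IsCtx ∧ C.IsSP

/-- Sequential (totally ordered) pomset contexts. -/
def Pomset.IsSeqCtx {A : Type} (C : Pomset (Option A)) : Prop := C.IsCtx ∧ C.IsWord

/-- The trivial context `*`. -/
def starCtx (A : Type) : Pomset (Option A) := Pomset.single (none : Option A)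

theorem option_get_eq_get {α : Type} {o₁ o₂ : Option α} (h : o₁ = o₂) (h₁ : o₁.isSome)
    (h₂ : o₂.isSome) : o₁.get h₁ = o₂.get h₂ := by subst h; rfl

/-- The order of `C[U]`: the orders of `C` (restricted away from `*`) and of `U`, with a
point of `C` below (resp. above) all of `U` when it is below (resp. above) the unique
`*`-node of `C`.  (For well-definedness of the order, the cross-relations are guarded by
the requirement that the star node is unique, which holds for every genuine context.) -/
def LPoset.insLe {A : Type} (c : LPoset (Option A)) (u : LPoset A) :
    ({x : c.carrier // c.lab x ≠ none} ⊕ u.carrier) →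
    ({x : c.carrier // c.lab x ≠ none} ⊕ u.carrier) → Prop
  | Sum.inl x, Sum.inl y => x.val ≤ y.val
  | Sum.inr x, Sum.inr y => x ≤ y
  | Sum.inl x, Sum.inr _ => c.uniqueStarL ∧ ∃ s, c.lab s = none ∧ x.val ≤ s
  | Sum.inr _, Sum.inl y => c.uniqueStarL ∧ ∃ s, c.lab s = none ∧ s ≤ y.val

/-- Insertion of a labelled poset `u` into the gap of a context `c`: the `*`-labelled
node is removed and `u` is put in its place, inheriting the order relations of `*`. -/
noncomputable def LPoset.insL {A : Type} (c : LPoset (Option A)) (u : LPoset A) :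
    LPoset A where
  carrier := {x : c.carrier // c.lab x ≠ none} ⊕ u.carrier
  fin := by classical exact inferInstance
  ord :=
    { le := LPoset.insLe c u
      lt := fun p q => LPoset.insLe c u p q ∧ ¬ LPoset.insLe c u q p
      lt_iff_le_not_ge := fun _ _ => Iff.rfl
      le_refl := by rintro (x | x) <;> exact le_refl _
      le_trans := by
        rintro (x | x) (y | y) (z | z) h1 h2
        · exact le_trans h1 h2
        · obtain ⟨hu, s, hs, hys⟩ := h2
          exact ⟨hu, s, hs, le_trans h1 hys⟩
        · obtain ⟨hu, s, hs, hxs⟩ := h1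
          obtain ⟨-, t, ht, htz⟩ := h2
          obtain ⟨w, hw, huniq⟩ := hu
          have hst : s = t := (huniq s hs).trans (huniq t ht).symm
          exact le_trans (hst ▸ hxs) htz
        · exact h1
        · obtain ⟨hu, s, hs, hsy⟩ := h1
          exact ⟨hu, s, hs, le_trans hsy h2⟩
        · obtain ⟨hu, s, hs, hsy⟩ := h1
          obtain ⟨-, t, ht, hyt⟩ := h2
          obtain ⟨w, hw, huniq⟩ := hu
          have hst : s = t := (huniq s hs).trans (huniq t ht).symm
          have hy : y.val = s := le_antisymm (hst.symm ▸ hyt) hsy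
          exact absurd (hy.symm ▸ hs) y.prop
        · exact h2
        · exact le_trans h1 h2
      le_antisymm := by
        rintro (x | x) (y | y) h1 h2
        · exact congrArg Sum.inl (Subtype.ext (le_antisymm h1 h2))
        · obtain ⟨hu, s, hs, hxs⟩ := h1
          obtain ⟨-, t, ht, htx⟩ := h2
          obtain ⟨w, hw, huniq⟩ := hu
          have hst : s = t := (huniq s hs).trans (huniq t ht).symm
          have hx : x.val = s := le_antisymm hxs (hst.symm ▸ htx)
          exact absurd (hx.symm ▸ hs) x.prop
        · obtain ⟨hu, s, hs, hsy⟩ := h1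
          obtain ⟨-, t, ht, hyt⟩ := h2
          obtain ⟨w, hw, huniq⟩ := hu
          have hst : s = t := (huniq s hs).trans (huniq t ht).symm
          have hy : y.val = s := le_antisymm (hst.symm ▸ hyt) hsy
          exact absurd (hy.symm ▸ hs) y.prop
        · exact congrArg Sum.inr (le_antisymm h1 h2) }
  lab := Sum.elim (fun x => (c.lab x.val).get (Option.isSome_iff_ne_none.mpr x.prop)) u.lab

/-- `Pomset.ins C U` is `C[U]`: plugging the pomset `U` into the gap of the context `C`. -/
noncomputable def Pomset.ins {A : Type} : Pomset (Option A) → Pomset A → Pomset A :=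
  Quotient.map₂ LPoset.insL (by
    rintro c₁ c₂ ⟨e, he⟩ u₁ u₂ ⟨f, hf⟩
    have hstar : c₁.uniqueStarL ↔ c₂.uniqueStarL := LPoset.uniqueStarL_congr e he
    refine ⟨{ toEquiv := Equiv.sumCongr
                (e.toEquiv.subtypeEquiv fun x => by
                  rw [show c₂.lab (e.toEquiv x) = c₁.lab x from he x]) f.toEquiv
              map_rel_iff' := ?_ }, ?_⟩
    · rintro (x | x) (y | y)
      · exact e.le_iff_le
      · show (c₂.uniqueStarL ∧ ∃ s, c₂.lab s = none ∧ (e x.val : c₂.carrier) ≤ s) ↔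
             (c₁.uniqueStarL ∧ ∃ s, c₁.lab s = none ∧ x.val ≤ s)
        constructor
        · rintro ⟨hu, s, hs, hxs⟩
          refine ⟨hstar.mpr hu, e.symm s, ?_, ?_⟩
          · have h2 := he (e.symm s)
            rw [OrderIso.apply_symm_apply] at h2
            rw [← h2]; exact hs
          · exact e.le_iff_le.mp (by rw [OrderIso.apply_symm_apply]; exact hxs)
        · rintro ⟨hu, s, hs, hxs⟩
          exact ⟨hstar.mp hu, e s, by rw [he]; exact hs, e.le_iff_le.mpr hxs⟩
      · show (c₂.uniqueStarL ∧ ∃ s, c₂.lab s = none ∧ s ≤ (e y.val : c₂.carrier)) ↔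
             (c₁.uniqueStarL ∧ ∃ s, c₁.lab s = none ∧ s ≤ y.val)
        constructor
        · rintro ⟨hu, s, hs, hsy⟩
          refine ⟨hstar.mpr hu, e.symm s, ?_, ?_⟩
          · have h2 := he (e.symm s)
            rw [OrderIso.apply_symm_apply] at h2
            rw [← h2]; exact hs
          · exact e.le_iff_le.mp (by rw [OrderIso.apply_symm_apply]; exact hsy)
        · rintro ⟨hu, s, hs, hsy⟩
          exact ⟨hstar.mp hu, e s, by rw [he]; exact hs, e.le_iff_le.mpr hsy⟩
      · exact f.le_iff_le
    · rintro (x | x)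
      · exact option_get_eq_get (he x.val) _ _
      · exact hf x)

/-! ### Pomset languages -/

abbrev Lang (A : Type) := Set (Pomset A)

def Lang.seq {A : Type} (L K : Lang A) : Lang A :=
  {W | ∃ U ∈ L, ∃ V ∈ K, W = Pomset.seq U V}

def Lang.par {A : Type} (L K : Lang A) : Lang A :=
  {W | ∃ U ∈ L, ∃ V ∈ K, W = Pomset.par U V}

def Lang.pow {A : Type} (L : Lang A) : ℕ → Lang A
  | 0 => {Pomset.empty A}
  | n + 1 => Lang.seq (Lang.pow L n) L

def Lang.star {A : Type} (L : Lang A) : Lang A := ⋃ n, L.pow n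

/-- Application of a context to a language: `C[L] = {C[U] : U ∈ L}`. -/
def Ctx.img {A : Type} (C : Pomset (Option A)) (L : Lang A) : Lang A :=
  {W | ∃ U ∈ L, W = C.ins U}

/-! ### CKA terms and semantics -/

inductive Term (A : Type) : Type
  | zero : Term A
  | one : Term A
  | var : A → Term A
  | add : Term A → Term A → Term A
  | seq : Term A → Term A → Term A
  | par : Term A → Term A → Term A
  | star : Term A → Term A

/-- Pomset language semantics of CKA terms. -/
def Term.lang {A : Type} : Term A → Lang A
  | .zero => ∅
  | .one => {Pomset.empty A}
  | .var a => {Pomset.single a}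
  | .add e f => e.lang ∪ f.lang
  | .seq e f => Lang.seq e.lang f.lang
  | .par e f => Lang.par e.lang f.lang
  | .star e => Lang.star e.lang

/-- Sets of hypotheses: a hypothesis `e ≤ f` is the pair `(e, f)`. -/
abbrev HypSet (A : Type) := Set (Term A × Term A)

/-- The congruence `≡^H` on CKA terms generated by the CKA axioms and the hypotheses `H`
(the constructor `hyp` encodes `e ≦^H f`, i.e. `e + f ≡^H f`, for `e ≤ f ∈ H`). -/
inductive CongH {A : Type} (H : HypSet A) : Term A → Term A → Prop
  | refl (e) : CongH H e e
  | symm {e f} : CongH H e f → CongH H f e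
  | trans {e f g} : CongH H e f → CongH H f g → CongH H e g
  | addCong {e e' f f'} : CongH H e e' → CongH H f f' → CongH H (.add e f) (.add e' f')
  | seqCong {e e' f f'} : CongH H e e' → CongH H f f' → CongH H (.seq e f) (.seq e' f')
  | parCong {e e' f f'} : CongH H e e' → CongH H f f' → CongH H (.par e f) (.par e' f')
  | starCong {e e'} : CongH H e e' → CongH H (.star e) (.star e')
  | addZero (e) : CongH H (.add e .zero) e
  | addIdem (e) : CongH H (.add e e) e
  | addComm (e f) : CongH H (.add e f) (.add f e)
  | addAssoc (e f g) : CongH H (.add e (.add f g)) (.add (.add e f) g)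
  | seqAssoc (e f g) : CongH H (.seq e (.seq f g)) (.seq (.seq e f) g)
  | seqDistL (e f g) : CongH H (.seq e (.add f g)) (.add (.seq e f) (.seq e g))
  | seqDistR (e f g) : CongH H (.seq (.add e f) g) (.add (.seq e g) (.seq f g))
  | seqOneR (e) : CongH H (.seq e .one) e
  | seqOneL (e) : CongH H (.seq .one e) e
  | seqZeroR (e) : CongH H (.seq e .zero) .zero
  | seqZeroL (e) : CongH H (.seq .zero e) .zero
  | parComm (e f) : CongH H (.par e f) (.par f e)
  | parOne (e) : CongH H (.par e .one) e
  | parZero (e) : CongH H (.par e .zero) .zero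
  | parAssoc (e f g) : CongH H (.par e (.par f g)) (.par (.par e f) g)
  | parDist (e f g) : CongH H (.par e (.add f g)) (.add (.par e f) (.par e g))
  | starUnfoldL (e) : CongH H (.add .one (.seq e (.star e))) (.star e)
  | starUnfoldR (e) : CongH H (.add .one (.seq (.star e) e)) (.star e)
  | lfpL {e f g} : CongH H (.add (.add e (.seq f g)) g) g →
      CongH H (.add (.seq (.star f) e) g) g
  | lfpR {e f g} : CongH H (.add (.add e (.seq f g)) f) f →
      CongH H (.add (.seq e (.star g)) f) f
  | hyp {e f} : (e, f) ∈ H → CongH H (.add e f) f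

/-- `e ≦^H f`, the natural order `e + f ≡^H f`. -/
def LeH {A : Type} (H : HypSet A) (e f : Term A) : Prop := CongH H (.add e f) f

/-- The `H`-closure of a pomset language, as an inductive predicate: the smallest language
containing `L` such that for all `e ≤ f ∈ H` and series-parallel contexts `C`,
if `C[⟦f⟧] ⊆ cl` then `C[⟦e⟧] ⊆ cl`. -/
inductive closure {A : Type} (H : HypSet A) (L : Lang A) : Pomset A → Prop
  | base {U} : U ∈ L → closure H L U
  | step {e f : Term A} (hef : (e, f) ∈ H) {C : Pomset (Option A)} (hC : C.IsSPCtx)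
      (hf : ∀ V ∈ f.lang, closure H L (C.ins V)) {U} (hU : U ∈ e.lang) :
      closure H L (C.ins U)

/-- `cl H L` is the `H`-closure of `L`. -/
def cl {A : Type} (H : HypSet A) (L : Lang A) : Lang A := {U | closure H L U}

/-- The sequential closure: like `cl` but only sequential contexts are used. -/
inductive seqClosure {A : Type} (H : HypSet A) (L : Lang A) : Pomset A → Prop
  | base {U} : U ∈ L → seqClosure H L U
  | step {e f : Term A} (hef : (e, f) ∈ H) {C : Pomset (Option A)} (hC : C.IsSeqCtx)
      (hf : ∀ V ∈ f.lang, seqClosure H L (C.ins V)) {U} (hU : U ∈ e.lang) :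
      seqClosure H L (C.ins U)

def seqCl {A : Type} (H : HypSet A) (L : Lang A) : Lang A := {U | seqClosure H L U}

/-! ### Implication, completeness, reductions -/

/-- `H` implies `H'`: every hypothesis of `H'` is derivable from `H`. -/
def Implies {A : Type} (H H' : HypSet A) : Prop := ∀ p ∈ H', LeH H p.1 p.2

/-- `H` is complete: semantic equivalence implies axiomatic equivalence. -/
def Complete {A : Type} (H : HypSet A) : Prop :=
  ∀ e f : Term A, cl H e.lang = cl H f.lang → CongH H e f

/-- A reduction from `H` to `H'` (presupposing that `H` implies `H'`). -/
structure IsReduction {A : Type} (H H' : HypSet A) (r : Term A → Term A) : Prop where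
  implies : Implies H H'
  equiv : ∀ e, CongH H e (r e)
  reflect : ∀ e f : Term A, cl H e.lang = cl H f.lang → cl H' (r e).lang = cl H' (r f).lang

def Reduces {A : Type} (H H' : HypSet A) : Prop := ∃ r, IsReduction H H' r

/-- A strong reduction from `H` to `H'`. -/
structure IsStrongReduction {A : Type} (H H' : HypSet A) (r : Term A → Term A)
    extends IsReduction H H' r : Prop where
  strong : ∀ e : Term A, cl H e.lang = cl H' (r e).lang

def StronglyReduces {A : Type} (H H' : HypSet A) : Prop := ∃ r, IsStrongReduction H H' r

/-- `H` factorises into `H₀` and `H₁`. -/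
def Factorises {A : Type} (H H₀ H₁ : HypSet A) : Prop :=
  Implies H H₀ ∧ Implies H H₁ ∧ ∀ L : Lang A, L ⊆ SPset A → cl H L = cl H₁ (cl H₀ L)

/-! ### The exchange hypotheses and sp-subsumption -/

/-- The exchange hypotheses `(e∥f)·(g∥h) ≤ (e·g)∥(f·h)`. -/
def exch (A : Type) : HypSet A :=
  {p | ∃ e f g h : Term A,
    p = (Term.seq (.par e f) (.par g h), Term.par (.seq e g) (.seq f h))}

/-- `⊑^sp`: the smallest precongruence on series-parallel pomsets satisfying the
exchange inequality. -/
inductive spSub {A : Type} : Pomset A → Pomset A → Prop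
  | refl {U : Pomset A} : U.IsSP → spSub U U
  | trans {U V W} : spSub U V → spSub V W → spSub U W
  | seqCong {U V U' V'} : spSub U V → spSub U' V' → spSub (Pomset.seq U U') (Pomset.seq V V')
  | parCong {U V U' V'} : spSub U V → spSub U' V' → spSub (Pomset.par U U') (Pomset.par V V')
  | exch {U V W X : Pomset A} : U.IsSP → V.IsSP → W.IsSP → X.IsSP →
      spSub (Pomset.seq (Pomset.par U V) (Pomset.par W X))
            (Pomset.par (Pomset.seq U W) (Pomset.seq V X))

/-! ### KA terms, grounded hypotheses, sequential reductions -/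

/-- A term is a KA term when it contains no `∥`. -/
def Term.noPar {A : Type} : Term A → Prop
  | .zero => True
  | .one => True
  | .var _ => True
  | .add e f => e.noPar ∧ f.noPar
  | .seq e f => e.noPar ∧ f.noPar
  | .par _ _ => False
  | .star e => e.noPar

/-- A non-empty word. -/
def IsNonemptyWord {A : Type} (W : Pomset A) : Prop := W.IsWord ∧ W ≠ Pomset.empty A

/-- A set of hypotheses is grounded when in each hypothesis `e ≤ f`, `e` is a KA term and
`⟦f⟧ = {W}` for a non-empty word `W`. -/
def Grounded {A : Type} (H : HypSet A) : Prop :=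
  ∀ p ∈ H, p.1.noPar ∧ ∃ W : Pomset A, IsNonemptyWord W ∧ p.2.lang = {W}

/-- `≡_KA^H`: the congruence on terms generated by the axioms of `≡` not involving `∥`
together with the hypotheses of `H`. -/
inductive KACong {A : Type} (H : HypSet A) : Term A → Term A → Prop
  | refl (e) : KACong H e e
  | symm {e f} : KACong H e f → KACong H f e
  | trans {e f g} : KACong H e f → KACong H f g → KACong H e g
  | addCong {e e' f f'} : KACong H e e' → KACong H f f' → KACong H (.add e f) (.add e' f')
  | seqCong {e e' f f'} : KACong H e e' → KACong H f f' → KACong H (.seq e f) (.seq e' f')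
  | starCong {e e'} : KACong H e e' → KACong H (.star e) (.star e')
  | addZero (e) : KACong H (.add e .zero) e
  | addIdem (e) : KACong H (.add e e) e
  | addComm (e f) : KACong H (.add e f) (.add f e)
  | addAssoc (e f g) : KACong H (.add e (.add f g)) (.add (.add e f) g)
  | seqAssoc (e f g) : KACong H (.seq e (.seq f g)) (.seq (.seq e f) g)
  | seqDistL (e f g) : KACong H (.seq e (.add f g)) (.add (.seq e f) (.seq e g))
  | seqDistR (e f g) : KACong H (.seq (.add e f) g) (.add (.seq e g) (.seq f g))
  | seqOneR (e) : KACong H (.seq e .one) e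
  | seqOneL (e) : KACong H (.seq .one e) e
  | seqZeroR (e) : KACong H (.seq e .zero) .zero
  | seqZeroL (e) : KACong H (.seq .zero e) .zero
  | starUnfoldL (e) : KACong H (.add .one (.seq e (.star e))) (.star e)
  | starUnfoldR (e) : KACong H (.add .one (.seq (.star e) e)) (.star e)
  | lfpL {e f g} : KACong H (.add (.add e (.seq f g)) g) g →
      KACong H (.add (.seq (.star f) e) g) g
  | lfpR {e f g} : KACong H (.add (.add e (.seq f g)) f) f →
      KACong H (.add (.seq e (.star g)) f) f
  | hyp {e f} : (e, f) ∈ H → KACong H (.add e f) f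

/-- A sequential reduction from `H` to `H'`. -/
structure IsSeqReduction {A : Type} (H H' : HypSet A) (r : Term A → Term A) : Prop where
  implies : Implies H H'
  equiv : ∀ e : Term A, e.noPar → KACong H e (r e)
  closure_eq : ∀ e : Term A, e.noPar → seqCl H e.lang = seqCl H' (r e).lang

/-- Extension of a map on (KA) terms to all CKA terms, homomorphically on `∥`. -/
def parExt {A : Type} (r : Term A → Term A) : Term A → Term A
  | .par e f => .par (parExt r e) (parExt r f)
  | e => r e

/-! ### Inductive characterisation of sp contexts -/

/-- The generators of series-parallel contexts (Lemma: `PC^sp` is the smallest such set). -/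
inductive GenCtx {A : Type} : Pomset (Option A) → Prop
  | star : GenCtx (Pomset.single (none : Option A))
  | seqL {U : Pomset A} {C} : U.IsSP → GenCtx C → GenCtx (Pomset.seq (Pomset.map some U) C)
  | seqR {C} {V : Pomset A} : GenCtx C → V.IsSP → GenCtx (Pomset.seq C (Pomset.map some V))
  | par {U : Pomset A} {C} : U.IsSP → GenCtx C → GenCtx (Pomset.par (Pomset.map some U) C)

/-! ### Reification -/

/-- Homomorphic extension of a letter map to terms. -/
def rTerm {A : Type} (r : A → Term A) : Term A → Term A
  | .zero => .zero
  | .one => .one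
  | .var a => r a
  | .add e f => .add (rTerm r e) (rTerm r f)
  | .seq e f => .seq (rTerm r e) (rTerm r f)
  | .par e f => .par (rTerm r e) (rTerm r f)
  | .star e => .star (rTerm r e)

/-- All letters of a term lie in `Γ`. -/
def TermOver {A : Type} (Γ : Set A) : Term A → Prop
  | .zero => True
  | .one => True
  | .var a => a ∈ Γ
  | .add e f => TermOver Γ e ∧ TermOver Γ f
  | .seq e f => TermOver Γ e ∧ TermOver Γ f
  | .par e f => TermOver Γ e ∧ TermOver Γ f
  | .star e => TermOver Γ e

/-- Extension of a letter map `r` to (series-parallel) pomsets, as a relation: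
`rMap r U V` means `V ∈ r(U)`. -/
inductive rMap {A : Type} (r : A → Term A) : Pomset A → Pomset A → Prop
  | one : rMap r (Pomset.empty A) (Pomset.empty A)
  | var (a : A) {V} : V ∈ (r a).lang → rMap r (Pomset.single a) V
  | seq {U U' V V'} : rMap r U V → rMap r U' V' →
      rMap r (Pomset.seq U U') (Pomset.seq V V')
  | par {U U' V V'} : rMap r U V → rMap r U' V' →
      rMap r (Pomset.par U U') (Pomset.par V V')

/-- Image of a language under (the pomset extension of) `r`. -/
def rImg {A : Type} (r : A → Term A) (L : Lang A) : Lang A := {V | ∃ U ∈ L, rMap r U V}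

/-- Series-parallel pomsets over the subalphabet `Γ`. -/
def SPover {A : Type} (Γ : Set A) : Lang A := {U | U.IsSP ∧ U.Over Γ}

/-- `r : Σ → Term Γ` is a reification from `H` to `H'`. -/
structure IsReification {A : Type} (Γ : Set A) (H H' : HypSet A) (r : A → Term A) : Prop where
  toGamma : ∀ a : A, TermOver Γ (r a)
  equiv : ∀ a : A, CongH H (r a) (.var a)
  expansive : ∀ a ∈ Γ, LeH (∅ : HypSet A) (.var a) (r a)
  preserves : ∀ L : Lang A, L ⊆ SPover Γ → cl H' L ⊆ SPover Γ
  hyps : ∀ p ∈ H, LeH H' (rTerm r p.1) (rTerm r p.2)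

end CKAH

namespace CKAH

/-! ### Boolean observations and CKAO -/

open scoped Classical

/-- Propositional (Boolean) terms over primitive observations `Ω`. -/
inductive BATerm (Ω : Type) : Type
  | bot : BATerm Ω
  | top : BATerm Ω
  | var : Ω → BATerm Ω
  | or : BATerm Ω → BATerm Ω → BATerm Ω
  | and : BATerm Ω → BATerm Ω → BATerm Ω
  | not : BATerm Ω → BATerm Ω

/-- The congruence `≡_BA` generated by the Boolean algebra axioms. -/
inductive BACong {Ω : Type} : BATerm Ω → BATerm Ω → Prop
  | refl (p) : BACong p p
  | symm {p q} : BACong p q → BACong q p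
  | trans {p q r} : BACong p q → BACong q r → BACong p r
  | orCong {p p' q q'} : BACong p p' → BACong q q' → BACong (.or p q) (.or p' q')
  | andCong {p p' q q'} : BACong p p' → BACong q q' → BACong (.and p q) (.and p' q')
  | notCong {p p'} : BACong p p' → BACong (.not p) (.not p')
  | orBot (p) : BACong (.or p .bot) p
  | orComm (p q) : BACong (.or p q) (.or q p)
  | orNot (p) : BACong (.or p (.not p)) .top
  | orAssoc (p q r) : BACong (.or p (.or q r)) (.or (.or p q) r)
  | andTop (p) : BACong (.and p .top) p
  | andComm (p q) : BACong (.and p q) (.and q p)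
  | andNot (p) : BACong (.and p (.not p)) .bot
  | andAssoc (p q r) : BACong (.and p (.and q r)) (.and (.and p q) r)
  | orAndDist (p q r) : BACong (.or p (.and q r)) (.and (.or p q) (.or p r))
  | andOrDist (p q r) : BACong (.and p (.or q r)) (.or (.and p q) (.and p r))

/-- `p ≦_BA q` iff `p ∨ q ≡_BA q`. -/
def leBA {Ω : Type} (p q : BATerm Ω) : Prop := BACong (BATerm.or p q) q

/-- The canonical propositional term of an atom `α ∈ 2^Ω`. -/
noncomputable def atomTerm {Ω : Type} [Fintype Ω] (α : Ω → Bool) : BATerm Ω :=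
  (Finset.univ : Finset Ω).toList.foldr
    (fun o t => BATerm.and (if α o then BATerm.var o else BATerm.not (BATerm.var o)) t)
    BATerm.top

/-- CKAO letters: program actions from `S` or propositional terms over `Ω`. -/
abbrev OLet (S Ω : Type) : Type := S ⊕ BATerm Ω

/-- The hypotheses `bool`: `p = q` whenever `p ≡_BA q`. -/
def boolHyp (S Ω : Type) : HypSet (OLet S Ω) :=
  {x | ∃ p q : BATerm Ω, BACong p q ∧ x = (Term.var (Sum.inr p), Term.var (Sum.inr q))}

/-- The hypotheses `contr`: `p ∧ q ≤ p · q`. -/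
def contrHyp (S Ω : Type) : HypSet (OLet S Ω) :=
  {x | ∃ p q : BATerm Ω,
    x = (Term.var (Sum.inr (BATerm.and p q)),
         Term.seq (Term.var (Sum.inr p)) (Term.var (Sum.inr q)))}

/-- The hypotheses `glue`: `0 = ⊥` and `p + q = p ∨ q`. -/
def glueHyp (S Ω : Type) : HypSet (OLet S Ω) :=
  {(Term.zero, Term.var (Sum.inr BATerm.bot)), (Term.var (Sum.inr BATerm.bot), Term.zero)} ∪
  {x | ∃ p q : BATerm Ω,
    x = (Term.add (Term.var (Sum.inr p)) (Term.var (Sum.inr q)),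
         Term.var (Sum.inr (BATerm.or p q))) ∨
    x = (Term.var (Sum.inr (BATerm.or p q)),
         Term.add (Term.var (Sum.inr p)) (Term.var (Sum.inr q)))}

/-- The hypotheses of CKAO: `obs = bool ∪ contr ∪ exch ∪ glue`. -/
def obsHyp (S Ω : Type) : HypSet (OLet S Ω) :=
  boolHyp S Ω ∪ contrHyp S Ω ∪ exch (OLet S Ω) ∪ glueHyp S Ω

/-- The hypotheses `contr' = {α ≤ α·α : α ∈ At}`. -/
noncomputable def contr'Hyp (S Ω : Type) [Fintype Ω] : HypSet (OLet S Ω) :=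
  {x | ∃ α : Ω → Bool,
    x = (Term.var (Sum.inr (atomTerm α)),
         Term.seq (Term.var (Sum.inr (atomTerm α))) (Term.var (Sum.inr (atomTerm α))))}

/-- The letter map of the reification: each action is mapped to itself, each
propositional term `p` to the sum of all atoms `α` with `α ≦_BA p`. -/
noncomputable def obsR (S Ω : Type) [Fintype Ω] [DecidableEq Ω] :
    OLet S Ω → Term (OLet S Ω)
  | Sum.inl a => Term.var (Sum.inl a)
  | Sum.inr p =>
    ((Finset.univ : Finset (Ω → Bool)).filter (fun α => leBA (atomTerm α) p)).toList.foldr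
      (fun α t => Term.add (Term.var (Sum.inr (atomTerm α))) t) Term.zero

end CKAH

namespace CKAH

/-! ### Letter-to-letter relabelling of pomsets -/

/-- Replace the labelling of a labelled poset. -/
def LPoset.withLabL {A B : Type} (u : LPoset A) (l : u.carrier → B) : LPoset B :=
  { carrier := u.carrier, lab := l }

/-- `RelP P U V`: `V` arises from `U` by replacing labels along the relation `P`. -/
def RelP {A B : Type} (P : A → B → Prop) (U : Pomset A) (V : Pomset B) : Prop :=
  ∃ (u : LPoset A) (l : u.carrier → B), (∀ x, P (u.lab x) (l x)) ∧
    U = (⟦u⟧ : Pomset A) ∧ V = (⟦u.withLabL l⟧ : Pomset B)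

theorem RelP_mk {A B : Type} {P : A → B → Prop} (u : LPoset A) {V : Pomset B} :
    RelP P (⟦u⟧ : Pomset A) V ↔ ∃ l : u.carrier → B, (∀ x, P (u.lab x) (l x)) ∧
      V = (⟦u.withLabL l⟧ : Pomset B) := by
  constructor
  · rintro ⟨u', l, hl, hu, rfl⟩
    obtain ⟨e, he⟩ : LPoset.Iso u u' := Quotient.exact hu
    refine ⟨fun x => l (e x), fun x => ?_, ?_⟩
    · rw [← he]; exact hl _
    · refine Quotient.sound ?_
      refine (LPoset.iso_equivalence B).symm ⟨(e : u.carrier ≃o u'.carrier), fun x => rfl⟩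
  · rintro ⟨l, hl, rfl⟩
    exact ⟨u, l, hl, rfl, rfl⟩

theorem withLab_seq {A B : Type} (u v : LPoset A) (l : (u.seqL v).carrier → B) :
    (⟦(u.seqL v).withLabL l⟧ : Pomset B) =
      Pomset.seq (⟦u.withLabL fun x => l (toLex (Sum.inl x))⟧ : Pomset B)
        (⟦v.withLabL fun x => l (toLex (Sum.inr x))⟧ : Pomset B) := by
  refine Quotient.sound ⟨OrderIso.refl (u.carrier ⊕ₗ v.carrier), ?_⟩
  rintro (x | x) <;> rfl

theorem withLab_par {A B : Type} (u v : LPoset A) (l : (u.parL v).carrier → B) :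
    (⟦(u.parL v).withLabL l⟧ : Pomset B) =
      Pomset.par (⟦u.withLabL fun x => l (Sum.inl x)⟧ : Pomset B)
        (⟦v.withLabL fun x => l (Sum.inr x)⟧ : Pomset B) := by
  refine Quotient.sound ⟨OrderIso.refl (u.carrier ⊕ v.carrier), ?_⟩
  rintro (x | x) <;> rfl

theorem RelP_seq {A B : Type} {P : A → B → Prop} (U V : Pomset A) (W : Pomset B) :
    RelP P (Pomset.seq U V) W ↔
      ∃ U' V', RelP P U U' ∧ RelP P V V' ∧ W = Pomset.seq U' V' := by
  induction U using Quotient.inductionOn with | _ u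
  induction V using Quotient.inductionOn with | _ v
  constructor
  · intro h
    obtain ⟨l, hl, rfl⟩ := (RelP_mk (u.seqL v)).1 h
    exact ⟨_, _, (RelP_mk u).2 ⟨_, fun x => hl (toLex (Sum.inl x)), rfl⟩,
      (RelP_mk v).2 ⟨_, fun x => hl (toLex (Sum.inr x)), rfl⟩, withLab_seq u v l⟩
  · rintro ⟨U', V', h1, h2, rfl⟩
    obtain ⟨l, hl, rfl⟩ := (RelP_mk u).1 h1
    obtain ⟨m, hm, rfl⟩ := (RelP_mk v).1 h2
    refine (RelP_mk (u.seqL v)).2 ⟨fun x => Sum.elim l m (ofLex x), ?_, ?_⟩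
    · rintro (x | x)
      · exact hl x
      · exact hm x
    · exact (withLab_seq u v (fun x => Sum.elim l m (ofLex x))).symm

theorem RelP_par {A B : Type} {P : A → B → Prop} (U V : Pomset A) (W : Pomset B) :
    RelP P (Pomset.par U V) W ↔
      ∃ U' V', RelP P U U' ∧ RelP P V V' ∧ W = Pomset.par U' V' := by
  induction U using Quotient.inductionOn with | _ u
  induction V using Quotient.inductionOn with | _ v
  constructor
  · intro h
    obtain ⟨l, hl, rfl⟩ := (RelP_mk (u.parL v)).1 h
    exact ⟨_, _, (RelP_mk u).2 ⟨_, fun x => hl (Sum.inl x), rfl⟩,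
      (RelP_mk v).2 ⟨_, fun x => hl (Sum.inr x), rfl⟩, withLab_par u v l⟩
  · rintro ⟨U', V', h1, h2, rfl⟩
    obtain ⟨l, hl, rfl⟩ := (RelP_mk u).1 h1
    obtain ⟨m, hm, rfl⟩ := (RelP_mk v).1 h2
    refine (RelP_mk (u.parL v)).2 ⟨fun x => Sum.elim l m x, ?_, ?_⟩
    · rintro (x | x)
      · exact hl x
      · exact hm x
    · exact (withLab_par u v (fun x => Sum.elim l m x)).symm

theorem RelP_empty {A B : Type} {P : A → B → Prop} (W : Pomset B) :
    RelP P (Pomset.empty A) W ↔ W = Pomset.empty B := by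
  refine (RelP_mk (LPoset.emptyL A)).trans ⟨?_, ?_⟩
  · rintro ⟨l, -, rfl⟩
    exact Quotient.sound ⟨OrderIso.refl (Fin 0), fun x => Fin.elim0 x⟩
  · rintro rfl
    exact ⟨fun x => Fin.elim0 x, fun x => Fin.elim0 x,
      Quotient.sound ⟨OrderIso.refl (Fin 0), fun x => Fin.elim0 x⟩⟩

theorem RelP_single {A B : Type} {P : A → B → Prop} (a : A) (W : Pomset B) :
    RelP P (Pomset.single a) W ↔ ∃ b, P a b ∧ W = Pomset.single b := by
  refine (RelP_mk (LPoset.singleL a)).trans ⟨?_, ?_⟩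
  · rintro ⟨l, hl, rfl⟩
    exact ⟨l PUnit.unit, hl PUnit.unit,
      Quotient.sound ⟨OrderIso.refl PUnit, fun x => rfl⟩⟩
  · rintro ⟨b, hb, rfl⟩
    exact ⟨fun _ => b, fun _ => hb, Quotient.sound ⟨OrderIso.refl PUnit, fun x => rfl⟩⟩

theorem RelP_isSP {A B : Type} {P : A → B → Prop} {U : Pomset A} (hU : U.IsSP) :
    ∀ {V : Pomset B}, RelP P U V → V.IsSP := by
  induction hU with
  | empty => intro V h; rw [RelP_empty] at h; rw [h]; exact .empty
  | single a => intro V h; rw [RelP_single] at h; obtain ⟨b, -, rfl⟩ := h; exact .single b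
  | seq _ _ ih1 ih2 =>
    intro V h
    obtain ⟨U', V', h1, h2, rfl⟩ := (RelP_seq _ _ _).1 h
    exact .seq (ih1 h1) (ih2 h2)
  | par _ _ ih1 ih2 =>
    intro V h
    obtain ⟨U', V', h1, h2, rfl⟩ := (RelP_par _ _ _).1 h
    exact .par (ih1 h1) (ih2 h2)

/-- Relabelling a context away from its gap. -/
noncomputable def ctxWithLab {A : Type} (c : LPoset (Option A))
    (l : {x : c.carrier // c.lab x ≠ none} → A) : LPoset (Option A) :=
  c.withLabL fun x => if h : c.lab x = none then none else some (l ⟨x, h⟩)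

theorem ctxWithLab_none {A : Type} (c : LPoset (Option A))
    (l : {x : c.carrier // c.lab x ≠ none} → A) (x : c.carrier) :
    (ctxWithLab c l).lab x = none ↔ c.lab x = none := by
  by_cases h : c.lab x = none <;> simp [ctxWithLab, LPoset.withLabL, h]

theorem ctxWithLab_star {A : Type} (c : LPoset (Option A))
    (l : {x : c.carrier // c.lab x ≠ none} → A) :
    (ctxWithLab c l).uniqueStarL ↔ c.uniqueStarL :=
  existsUnique_congr (ctxWithLab_none c l)

theorem ins_withLab {A : Type} (c : LPoset (Option A)) (u : LPoset A)
    (l : {x : c.carrier // c.lab x ≠ none} → A) (m : u.carrier → A) :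
    Pomset.ins (⟦ctxWithLab c l⟧ : Pomset (Option A)) (⟦u.withLabL m⟧ : Pomset A) =
      (⟦(c.insL u).withLabL (Sum.elim l m)⟧ : Pomset A) := by
  refine Quotient.sound ⟨{
    toEquiv := Equiv.sumCongr
      (Equiv.subtypeEquivRight fun x => (ctxWithLab_none c l x).not) (Equiv.refl u.carrier)
    map_rel_iff' := ?_ }, ?_⟩
  · rintro (x | x) (y | y)
    · exact Iff.rfl
    · exact and_congr (ctxWithLab_star c l).symm
        (exists_congr fun s => and_congr_left' (ctxWithLab_none c l s).symm)
    · exact and_congr (ctxWithLab_star c l).symm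
        (exists_congr fun s => and_congr_left' (ctxWithLab_none c l s).symm)
    · exact Iff.rfl
  · rintro (⟨x, hx⟩ | x)
    · have hx' := (ctxWithLab_none c l x).not.1 hx
      have h2 : (ctxWithLab c l).lab x = some (l ⟨x, hx'⟩) := dif_neg hx'
      exact Option.some_injective _ (h2.symm.trans (Option.some_get _).symm)
    · rfl

theorem RelP_ins {A : Type} {P : A → A → Prop} {C : Pomset (Option A)} (hC : C.IsSPCtx)
    {U W : Pomset A} (h : RelP P (C.ins U) W) :
    ∃ (D : Pomset (Option A)) (U' : Pomset A), D.IsSPCtx ∧ RelP P U U' ∧ W = D.ins U' ∧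
      ∀ V V', RelP P V V' → RelP P (C.ins V) (D.ins V') := by
  induction C using Quotient.inductionOn with | _ c
  induction U using Quotient.inductionOn with | _ u
  obtain ⟨l, hl, rfl⟩ := (RelP_mk (c.insL u)).1 h
  refine ⟨(⟦ctxWithLab c fun x => l (Sum.inl x)⟧ : Pomset (Option A)),
    (⟦u.withLabL fun x => l (Sum.inr x)⟧ : Pomset A), ⟨?_, ?_⟩, ?_, ?_, ?_⟩
  · exact (ctxWithLab_star c _).2 hC.1
  · exact RelP_isSP (P := fun _ _ => True) hC.2
      ((RelP_mk c).2 ⟨_, fun _ => trivial, rfl⟩)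
  · exact (RelP_mk u).2 ⟨_, fun x => hl (Sum.inr x), rfl⟩
  · rw [ins_withLab]
    congr 2
    funext x
    rcases x with x | x <;> rfl
  · intro V V' hV
    induction V using Quotient.inductionOn with | _ v
    obtain ⟨m, hm, rfl⟩ := (RelP_mk v).1 hV
    rw [ins_withLab]
    refine (RelP_mk (c.insL v)).2 ⟨_, ?_, rfl⟩
    rintro (x | x)
    · exact hl (Sum.inl x)
    · exact hm x

theorem rTerm_lang {A : Type} {P : A → A → Prop} {r : A → Term A}
    (hr : ∀ a V, V ∈ (r a).lang ↔ ∃ b, P a b ∧ V = Pomset.single b) (e : Term A) :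
    ∀ V, V ∈ (rTerm r e).lang ↔ ∃ U ∈ e.lang, RelP P U V := by
  induction e with
  | zero => intro V; simp [rTerm, Term.lang]
  | one => intro V; simp [rTerm, Term.lang, RelP_empty]
  | var a => intro V; simp [rTerm, Term.lang, RelP_single, hr]
  | add e f ihe ihf =>
    intro V
    simp only [rTerm, Term.lang, Set.mem_union, ihe, ihf, or_and_right, exists_or]
  | seq e f ihe ihf =>
    intro V
    simp only [rTerm, Term.lang, Lang.seq, Set.mem_ofPred_eq, ihe, ihf]
    constructor
    · rintro ⟨U', ⟨U, hU, h1⟩, V', ⟨V, hV, h2⟩, rfl⟩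
      exact ⟨_, ⟨U, hU, V, hV, rfl⟩, (RelP_seq _ _ _).2 ⟨_, _, h1, h2, rfl⟩⟩
    · rintro ⟨_, ⟨U, hU, V, hV, rfl⟩, h⟩
      obtain ⟨U', V', h1, h2, rfl⟩ := (RelP_seq _ _ _).1 h
      exact ⟨U', ⟨U, hU, h1⟩, V', ⟨V, hV, h2⟩, rfl⟩
  | par e f ihe ihf =>
    intro V
    simp only [rTerm, Term.lang, Lang.par, Set.mem_ofPred_eq, ihe, ihf]
    constructor
    · rintro ⟨U', ⟨U, hU, h1⟩, V', ⟨V, hV, h2⟩, rfl⟩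
      exact ⟨_, ⟨U, hU, V, hV, rfl⟩, (RelP_par _ _ _).2 ⟨_, _, h1, h2, rfl⟩⟩
    · rintro ⟨_, ⟨U, hU, V, hV, rfl⟩, h⟩
      obtain ⟨U', V', h1, h2, rfl⟩ := (RelP_par _ _ _).1 h
      exact ⟨U', ⟨U, hU, h1⟩, V', ⟨V, hV, h2⟩, rfl⟩
  | star e ihe =>
    have key : ∀ n V, V ∈ Lang.pow (rTerm r e).lang n ↔
        ∃ U ∈ Lang.pow e.lang n, RelP P U V := by
      intro n
      induction n with
      | zero => intro V; simp [Lang.pow, RelP_empty]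
      | succ n ih =>
        intro V
        simp only [Lang.pow, Lang.seq, Set.mem_ofPred_eq, ih, ihe]
        constructor
        · rintro ⟨U', ⟨U, hU, h1⟩, V', ⟨V, hV, h2⟩, rfl⟩
          exact ⟨_, ⟨U, hU, V, hV, rfl⟩, (RelP_seq _ _ _).2 ⟨_, _, h1, h2, rfl⟩⟩
        · rintro ⟨_, ⟨U, hU, V, hV, rfl⟩, h⟩
          obtain ⟨U', V', h1, h2, rfl⟩ := (RelP_seq _ _ _).1 h
          exact ⟨U', ⟨U, hU, h1⟩, V', ⟨V, hV, h2⟩, rfl⟩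
    intro V
    simp only [rTerm, Term.lang, Lang.star, Set.mem_iUnion, key]
    constructor
    · rintro ⟨n, U, hU, h⟩; exact ⟨U, ⟨n, hU⟩, h⟩
    · rintro ⟨U, ⟨n, hU⟩, h⟩; exact ⟨n, U, hU, h⟩

theorem cl_subset {A : Type} {H : HypSet A} {L K : Lang A} (h : L ⊆ cl H K) :
    cl H L ⊆ cl H K := by
  intro U hU
  induction hU with
  | base hU => exact h hU
  | step hef hC hf hU ih => exact closure.step hef hC ih hU

/-- The reification argument: the closure is transported along a letter-to-letters map. -/
theorem reify {A : Type} {P : A → A → Prop} {r : A → Term A} {H H' : HypSet A}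
    (hr : ∀ a V, V ∈ (r a).lang ↔ ∃ b, P a b ∧ V = Pomset.single b)
    (hH : ∀ e f, (e, f) ∈ H → ∀ (D : Pomset (Option A)), D.IsSPCtx → ∀ M : Lang A,
      (∀ V ∈ (rTerm r f).lang, closure H' M (D.ins V)) →
      ∀ U ∈ (rTerm r e).lang, closure H' M (D.ins U))
    (e f : Term A) (h : cl H e.lang ⊆ cl H f.lang) :
    cl H' (rTerm r e).lang ⊆ cl H' (rTerm r f).lang := by
  have key : ∀ U, closure H f.lang U → ∀ W, RelP P U W → closure H' (rTerm r f).lang W := by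
    intro U hU
    induction hU with
    | base hU => intro W hW; exact .base ((rTerm_lang hr f W).2 ⟨_, hU, hW⟩)
    | @step e' f' hef C hC hf U hU ih =>
      intro W hW
      obtain ⟨D, U', hD, hUU', rfl, hDV⟩ := RelP_ins hC hW
      refine hH e' f' hef D hD _ ?_ U' ((rTerm_lang hr e' U').2 ⟨U, hU, hUU'⟩)
      intro V' hV'
      obtain ⟨V, hV, hVV'⟩ := (rTerm_lang hr f' V').1 hV'
      exact ih V hV _ (hDV _ _ hVV')
  refine cl_subset ?_
  intro W hW
  obtain ⟨U, hU, hUW⟩ := (rTerm_lang hr e W).1 hW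
  exact key U (h (.base hU)) W hUW

/-! ### Boolean terms -/

namespace BACong
variable {Ω : Type}

theorem orIdem (p : BATerm Ω) : BACong (.or p p) p :=
  (andTop _).symm.trans <| (andCong (refl _) (orNot p).symm).trans <|
    (orAndDist _ _ _).symm.trans <| (orCong (refl _) (andNot p)).trans (orBot p)

theorem orTop (p : BATerm Ω) : BACong (.or p .top) .top :=
  (andTop _).symm.trans <| (andCong (refl _) (orNot p).symm).trans <|
    (orAndDist _ _ _).symm.trans <|
      (orCong (refl _) ((andComm _ _).trans (andTop _))).trans (orNot p)

theorem andBot (p : BATerm Ω) : BACong (.and p .bot) .bot :=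
  (orBot _).symm.trans <| (orCong (refl _) (andNot p).symm).trans <|
    (andOrDist _ _ _).symm.trans <|
      (andCong (refl _) ((orComm _ _).trans (orBot _))).trans (andNot p)

theorem orAbsorb (p q : BATerm Ω) : BACong (.or p (.and p q)) p :=
  (orCong (andTop p).symm (refl _)).trans <| (andOrDist _ _ _).symm.trans <|
    (andCong (refl _) ((orComm _ _).trans (orTop q))).trans (andTop p)

theorem andAbsorb (p q : BATerm Ω) : BACong (.and p (.or p q)) p :=
  (andCong (orBot p).symm (refl _)).trans <| (orAndDist _ _ _).symm.trans <|
    (orCong (refl _) ((andComm _ _).trans (andBot q))).trans (orBot p)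

end BACong

/-- The setoid of `≡_BA`. -/
def baSetoid (Ω : Type) : Setoid (BATerm Ω) := ⟨BACong, .refl, .symm, .trans⟩

/-- The Lindenbaum algebra. -/
def LQ (Ω : Type) : Type := Quotient (baSetoid Ω)

/-- The class of a propositional term. -/
def LQ.mk {Ω : Type} (p : BATerm Ω) : LQ Ω := Quotient.mk (baSetoid Ω) p

theorem LQ.mk_eq {Ω : Type} {p q : BATerm Ω} : LQ.mk p = LQ.mk q ↔ BACong p q :=
  Quotient.eq (r := baSetoid Ω)

theorem LQ.ind {Ω : Type} {motive : LQ Ω → Prop} (h : ∀ p, motive (LQ.mk p)) (x : LQ Ω) :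
    motive x := Quotient.inductionOn x h

/-- Join on the Lindenbaum algebra. -/
def LQ.join {Ω : Type} : LQ Ω → LQ Ω → LQ Ω :=
  Quotient.map₂ BATerm.or fun _ _ h _ _ h' => BACong.orCong h h'

/-- Meet on the Lindenbaum algebra. -/
def LQ.meet {Ω : Type} : LQ Ω → LQ Ω → LQ Ω :=
  Quotient.map₂ BATerm.and fun _ _ h _ _ h' => BACong.andCong h h'

@[reducible] def lqLattice (Ω : Type) : Lattice (LQ Ω) :=
  @Lattice.mk' (LQ Ω) ⟨LQ.join⟩ ⟨LQ.meet⟩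
    (by intro a b; induction a using LQ.ind; induction b using LQ.ind
        exact LQ.mk_eq.2 (.orComm _ _))
    (by intro a b c
        induction a using LQ.ind; induction b using LQ.ind; induction c using LQ.ind
        exact LQ.mk_eq.2 (BACong.orAssoc _ _ _).symm)
    (by intro a b; induction a using LQ.ind; induction b using LQ.ind
        exact LQ.mk_eq.2 (.andComm _ _))
    (by intro a b c
        induction a using LQ.ind; induction b using LQ.ind; induction c using LQ.ind
        exact LQ.mk_eq.2 (BACong.andAssoc _ _ _).symm)
    (by intro a b; induction a using LQ.ind; induction b using LQ.ind
        exact LQ.mk_eq.2 (.orAbsorb _ _))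
    (by intro a b; induction a using LQ.ind; induction b using LQ.ind
        exact LQ.mk_eq.2 (.andAbsorb _ _))

instance (Ω : Type) : BooleanAlgebra (LQ Ω) :=
  { lqLattice Ω with
    compl := Quotient.map BATerm.not fun _ _ h => BACong.notCong h
    top := LQ.mk .top
    bot := LQ.mk .bot
    le_sup_inf := by
      intro a b c
      induction a using LQ.ind; induction b using LQ.ind; induction c using LQ.ind
      exact @le_of_eq _ (lqLattice Ω).toPartialOrder.toPreorder _ _ (LQ.mk_eq.2 (BACong.orAndDist _ _ _).symm)
    le_top := by
      intro a; induction a using LQ.ind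
      exact (@sup_eq_right _ (lqLattice Ω).toSemilatticeSup _ _).1 (LQ.mk_eq.2 (.orTop _))
    bot_le := by
      intro a; induction a using LQ.ind
      exact (@sup_eq_left _ (lqLattice Ω).toSemilatticeSup _ _).1 (LQ.mk_eq.2 (.orBot _))
    inf_compl_le_bot := by
      intro a; induction a using LQ.ind
      exact @le_of_eq _ (lqLattice Ω).toPartialOrder.toPreorder _ _ (LQ.mk_eq.2 (.andNot _))
    top_le_sup_compl := by
      intro a; induction a using LQ.ind
      exact @le_of_eq _ (lqLattice Ω).toPartialOrder.toPreorder _ _ (LQ.mk_eq.2 (BACong.orNot _).symm) }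

theorem LQ.mk_sup {Ω : Type} (p q : BATerm Ω) : LQ.mk (.or p q) = LQ.mk p ⊔ LQ.mk q := rfl
theorem LQ.mk_inf {Ω : Type} (p q : BATerm Ω) : LQ.mk (.and p q) = LQ.mk p ⊓ LQ.mk q := rfl
theorem LQ.mk_not {Ω : Type} (p : BATerm Ω) : LQ.mk (.not p) = (LQ.mk p)ᶜ := rfl
theorem LQ.mk_top {Ω : Type} : LQ.mk (.top : BATerm Ω) = ⊤ := rfl
theorem LQ.mk_bot {Ω : Type} : LQ.mk (.bot : BATerm Ω) = ⊥ := rfl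

theorem leBA_iff {Ω : Type} {p q : BATerm Ω} : leBA p q ↔ LQ.mk p ≤ LQ.mk q := by
  rw [leBA, ← LQ.mk_eq, LQ.mk_sup, sup_eq_right]

/-- Truth value of a propositional term under an assignment. -/
def BATerm.eval {Ω : Type} (α : Ω → Bool) : BATerm Ω → Bool
  | .bot => false
  | .top => true
  | .var o => α o
  | .or p q => p.eval α || q.eval α
  | .and p q => p.eval α && q.eval α
  | .not p => !p.eval α

theorem eval_cong {Ω : Type} (α : Ω → Bool) {p q : BATerm Ω} (h : BACong p q) :
    p.eval α = q.eval α := by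
  induction h with
  | refl => rfl
  | symm _ ih => exact ih.symm
  | trans _ _ ih1 ih2 => exact ih1.trans ih2
  | orCong _ _ ih1 ih2 => simp [BATerm.eval, ih1, ih2]
  | andCong _ _ ih1 ih2 => simp [BATerm.eval, ih1, ih2]
  | notCong _ ih => simp [BATerm.eval, ih]
  | orBot p => simp [BATerm.eval]
  | orComm p q => simp [BATerm.eval, Bool.or_comm]
  | orNot p => simp [BATerm.eval]
  | orAssoc p q r => simp [BATerm.eval, Bool.or_assoc]
  | andTop p => simp [BATerm.eval]
  | andComm p q => simp [BATerm.eval, Bool.and_comm]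
  | andNot p => simp [BATerm.eval]
  | andAssoc p q r => simp [BATerm.eval, Bool.and_assoc]
  | orAndDist p q r => simp [BATerm.eval, Bool.or_and_distrib_left]
  | andOrDist p q r => simp [BATerm.eval, Bool.and_or_distrib_left]

/-- The conjunction of the literals of `α` over a list of observations. -/
noncomputable def litFold {Ω : Type} (α : Ω → Bool) (l : List Ω) : BATerm Ω :=
  l.foldr (fun o t => BATerm.and (if α o then BATerm.var o else BATerm.not (BATerm.var o)) t)
    BATerm.top

theorem eval_litFold {Ω : Type} (α : Ω → Bool) (l : List Ω) : (litFold α l).eval α = true := by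
  induction l with
  | nil => rfl
  | cons o l ih =>
    show (BATerm.and _ (litFold α l)).eval α = true
    cases h : α o <;> simp [BATerm.eval, h, ih]

theorem litFold_le_var {Ω : Type} (α : Ω → Bool) (l : List Ω) (o : Ω) (ho : o ∈ l) :
    LQ.mk (litFold α l) ≤ LQ.mk (if α o then BATerm.var o else BATerm.not (BATerm.var o)) := by
  induction l with
  | nil => simp at ho
  | cons o' l ih =>
    show LQ.mk (BATerm.and _ (litFold α l)) ≤ _
    rw [LQ.mk_inf]
    rcases List.mem_cons.1 ho with rfl | h
    · exact inf_le_left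
    · exact inf_le_right.trans (ih h)

theorem litFold_congr {Ω : Type} (α β : Ω → Bool) (l : List Ω) (h : ∀ o ∈ l, α o = β o) :
    litFold α l = litFold β l := by
  induction l with
  | nil => rfl
  | cons o l ih =>
    show BATerm.and _ (litFold α l) = BATerm.and _ (litFold β l)
    rw [ih fun o' ho' => h o' (List.mem_cons_of_mem _ ho'), h o List.mem_cons_self]

open scoped Classical in
theorem litFold_cover {Ω : Type} (y : LQ Ω) (l : List Ω) (hl : l.Nodup) :
    ∀ z : LQ Ω, (∀ α, z ⊓ LQ.mk (litFold α l) ≤ y) → z ≤ y := by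
  induction l with
  | nil =>
    intro z hz
    have := hz fun _ => true
    rwa [show LQ.mk (litFold (fun _ : Ω => true) []) = ⊤ from rfl, inf_top_eq] at this
  | cons o l ih =>
    intro z hz
    rw [List.nodup_cons] at hl
    have step : ∀ b : Bool,
        z ⊓ LQ.mk (if b then BATerm.var o else BATerm.not (BATerm.var o)) ≤ y := by
      intro b
      refine ih hl.2 _ fun α => ?_
      have h1 := hz (Function.update α o b)
      have h2 : litFold (Function.update α o b) (o :: l) =
          BATerm.and (if b then BATerm.var o else BATerm.not (BATerm.var o)) (litFold α l) := by
        show BATerm.and _ (litFold _ l) = _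
        rw [Function.update_self, litFold_congr _ α l]
        intro o' ho'
        have hne : o' ≠ o := by
          rintro rfl
          exact hl.1 ho'
        exact Function.update_of_ne hne _ _
      rw [h2, LQ.mk_inf, ← inf_assoc] at h1
      exact h1
    have ht := step true
    have hf := step false
    simp only [if_true, Bool.false_eq_true, if_false, LQ.mk_not] at ht hf
    calc z = z ⊓ LQ.mk (.var o) ⊔ z ⊓ (LQ.mk (.var o))ᶜ := by
          rw [← inf_sup_left, sup_compl_eq_top, inf_top_eq]
      _ ≤ y := sup_le ht hf

section Atoms
variable {Ω : Type} [Fintype Ω]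

theorem atom_decides (α : Ω → Bool) (p : BATerm Ω) :
    LQ.mk (atomTerm α) ≤ if p.eval α then LQ.mk p else (LQ.mk p)ᶜ := by
  induction p with
  | bot => simp [BATerm.eval, LQ.mk_bot]
  | top => simp [BATerm.eval, LQ.mk_top]
  | var o =>
    have := litFold_le_var α (Finset.univ : Finset Ω).toList o (by simp)
    change LQ.mk (atomTerm α) ≤ _ at this
    cases h : α o <;> simpa [BATerm.eval, h, LQ.mk_not] using this
  | or p q ihp ihq =>
    cases hp : p.eval α <;> cases hq : q.eval α <;>
      simp only [hp, hq, BATerm.eval, if_true, Bool.false_eq_true, if_false, LQ.mk_sup,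
        Bool.or_true, Bool.or_false, compl_sup] at ihp ihq ⊢
    · exact le_inf ihp ihq
    · exact ihq.trans le_sup_right
    · exact ihp.trans le_sup_left
    · exact ihp.trans le_sup_left
  | and p q ihp ihq =>
    cases hp : p.eval α <;> cases hq : q.eval α <;>
      simp only [hp, hq, BATerm.eval, if_true, Bool.false_eq_true, if_false, LQ.mk_inf,
        Bool.and_true, Bool.and_false, compl_inf] at ihp ihq ⊢
    · exact ihp.trans le_sup_left
    · exact ihp.trans le_sup_left
    · exact ihq.trans le_sup_right
    · exact le_inf ihp ihq
  | not p ih =>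
    cases hp : p.eval α <;> simpa [hp, BATerm.eval, LQ.mk_not] using ih

theorem leBA_atom_iff (α : Ω → Bool) (p : BATerm Ω) :
    leBA (atomTerm α) p ↔ p.eval α = true := by
  constructor
  · intro h
    have := eval_cong α h
    rw [BATerm.eval, show (atomTerm α).eval α = true from eval_litFold α _, Bool.true_or] at this
    exact this.symm
  · intro h
    have := atom_decides α p
    rw [h] at this
    exact leBA_iff.2 this

/-- Disjunction of a list of atoms. -/
noncomputable def orFold (l : List (Ω → Bool)) : BATerm Ω :=
  l.foldr (fun α t => BATerm.or (atomTerm α) t) BATerm.bot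

theorem le_orFold (l : List (Ω → Bool)) (α : Ω → Bool) (h : α ∈ l) :
    LQ.mk (atomTerm α) ≤ LQ.mk (orFold l) := by
  induction l with
  | nil => simp at h
  | cons β l ih =>
    show _ ≤ LQ.mk (BATerm.or _ (orFold l))
    rw [LQ.mk_sup]
    rcases List.mem_cons.1 h with rfl | h
    · exact le_sup_left
    · exact (ih h).trans le_sup_right

theorem orFold_le (l : List (Ω → Bool)) (y : LQ Ω)
    (h : ∀ α ∈ l, LQ.mk (atomTerm α) ≤ y) : LQ.mk (orFold l) ≤ y := by
  induction l with
  | nil => exact bot_le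
  | cons β l ih =>
    show LQ.mk (BATerm.or _ (orFold l)) ≤ _
    rw [LQ.mk_sup]
    exact sup_le (h _ List.mem_cons_self) (ih fun α hα => h α (List.mem_cons_of_mem _ hα))

theorem normal_form (p : BATerm Ω) (l : List (Ω → Bool))
    (hl : ∀ α, α ∈ l ↔ leBA (atomTerm α) p) : BACong p (orFold l) := by
  rw [← LQ.mk_eq]
  refine le_antisymm ?_ (orFold_le l _ fun α hα => leBA_iff.1 ((hl α).1 hα))
  refine litFold_cover _ _ (Finset.univ : Finset Ω).nodup_toList _ fun α => ?_
  by_cases h : p.eval α = true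
  · exact inf_le_right.trans (le_orFold l α ((hl α).2 ((leBA_atom_iff α p).2 h)))
  · have h1 : LQ.mk (atomTerm α) ≤ (LQ.mk p)ᶜ := by
      simpa [h] using atom_decides α p
    exact (inf_le_inf_left _ h1).trans (by rw [inf_compl_eq_bot]; exact bot_le)

end Atoms

/-! ### The reduction -/

theorem congH_antisymm {A : Type} {H : HypSet A} {e f : Term A} (h1 : (e, f) ∈ H)
    (h2 : (f, e) ∈ H) : CongH H e f :=
  (CongH.hyp h2).symm.trans ((CongH.addComm _ _).trans (CongH.hyp h1))

section Obs
variable (S Ω : Type)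

theorem obs_bool {p q : BATerm Ω} (h : BACong p q) :
    CongH (obsHyp S Ω) (.var (Sum.inr p)) (.var (Sum.inr q)) :=
  congH_antisymm (Or.inl (Or.inl (Or.inl ⟨p, q, h, rfl⟩)))
    (Or.inl (Or.inl (Or.inl ⟨q, p, h.symm, rfl⟩)))

theorem obs_bot : CongH (obsHyp S Ω) (.var (Sum.inr .bot)) .zero :=
  congH_antisymm (Or.inr (Or.inl (Or.inr rfl))) (Or.inr (Or.inl (Or.inl rfl)))

theorem obs_or (p q : BATerm Ω) :
    CongH (obsHyp S Ω) (.var (Sum.inr (.or p q)))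
      (.add (.var (Sum.inr p)) (.var (Sum.inr q))) :=
  congH_antisymm (Or.inr (Or.inr ⟨p, q, Or.inr rfl⟩)) (Or.inr (Or.inr ⟨p, q, Or.inl rfl⟩))

theorem obs_orFold [Fintype Ω] (l : List (Ω → Bool)) :
    CongH (obsHyp S Ω) (.var (Sum.inr (orFold l)))
      (l.foldr (fun α t => Term.add (Term.var (Sum.inr (atomTerm α))) t) Term.zero) := by
  induction l with
  | nil => exact obs_bot S Ω
  | cons α l ih => exact (obs_or S Ω _ _).trans (.addCong (.refl _) ih)

theorem lang_foldr [Fintype Ω] (l : List (Ω → Bool)) (V : Pomset (OLet S Ω)) :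
    V ∈ (l.foldr (fun α t => Term.add (Term.var (Sum.inr (atomTerm α))) t)
      (Term.zero : Term (OLet S Ω))).lang ↔
      ∃ α ∈ l, V = Pomset.single (Sum.inr (atomTerm α)) := by
  induction l with
  | nil => simp [Term.lang]
  | cons α l ih =>
    rw [List.foldr_cons, Term.lang, Set.mem_union, ih]
    simp [Term.lang]

/-- The letter relation underlying `obsR`. -/
def obsP [Fintype Ω] : OLet S Ω → OLet S Ω → Prop
  | Sum.inl a, b => b = Sum.inl a
  | Sum.inr p, b => ∃ α : Ω → Bool, p.eval α = true ∧ b = Sum.inr (atomTerm α)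

theorem obsR_inr_lang [Fintype Ω] [DecidableEq Ω] (p : BATerm Ω) (V : Pomset (OLet S Ω)) :
    V ∈ (obsR S Ω (Sum.inr p)).lang ↔
      ∃ α : Ω → Bool, p.eval α = true ∧ V = Pomset.single (Sum.inr (atomTerm α)) := by
  rw [obsR, lang_foldr]
  simp [leBA_atom_iff]

theorem obsR_lang [Fintype Ω] [DecidableEq Ω] (a : OLet S Ω) (V : Pomset (OLet S Ω)) :
    V ∈ (obsR S Ω a).lang ↔ ∃ b, obsP S Ω a b ∧ V = Pomset.single b := by
  rcases a with a | p
  · simp [obsR, obsP, Term.lang]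
  · rw [obsR_inr_lang]
    constructor
    · rintro ⟨α, h, rfl⟩; exact ⟨_, ⟨α, h, rfl⟩, rfl⟩
    · rintro ⟨_, ⟨α, h, rfl⟩, rfl⟩; exact ⟨α, h, rfl⟩

theorem obs_equiv [Fintype Ω] [DecidableEq Ω] (e : Term (OLet S Ω)) :
    CongH (obsHyp S Ω) e (rTerm (obsR S Ω) e) := by
  induction e with
  | zero => exact .refl _
  | one => exact .refl _
  | var a =>
    rcases a with a | p
    · exact .refl _
    · refine (obs_bool S Ω (normal_form p _ ?_)).trans (obs_orFold S Ω _)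
      intro α
      simp
  | add _ _ h1 h2 => exact .addCong h1 h2
  | seq _ _ h1 h2 => exact .seqCong h1 h2
  | par _ _ h1 h2 => exact .parCong h1 h2
  | star _ h => exact .starCong h

theorem obs_hyps [Fintype Ω] [DecidableEq Ω] (e f : Term (OLet S Ω))
    (h : (e, f) ∈ obsHyp S Ω) (D : Pomset (Option (OLet S Ω))) (hD : D.IsSPCtx)
    (M : Lang (OLet S Ω))
    (hf : ∀ V ∈ (rTerm (obsR S Ω) f).lang,
      closure (exch (OLet S Ω) ∪ contr'Hyp S Ω) M (D.ins V)) :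
    ∀ U ∈ (rTerm (obsR S Ω) e).lang,
      closure (exch (OLet S Ω) ∪ contr'Hyp S Ω) M (D.ins U) := by
  rcases h with ((⟨p, q, hpq, h⟩ | ⟨p, q, h⟩) | ⟨e₁, f₁, g₁, h₁, h⟩) | ((h | h) | ⟨p, q, h | h⟩)
  · obtain ⟨rfl, rfl⟩ := Prod.mk.inj h
    intro U hU
    obtain ⟨α, hα, rfl⟩ := (obsR_inr_lang S Ω p U).1 hU
    exact hf _ ((obsR_inr_lang S Ω q _).2 ⟨α, by rw [← eval_cong α hpq]; exact hα, rfl⟩)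
  · obtain ⟨rfl, rfl⟩ := Prod.mk.inj h
    intro U hU
    obtain ⟨α, hα, rfl⟩ := (obsR_inr_lang S Ω _ U).1 hU
    obtain ⟨hp, hq⟩ : p.eval α = true ∧ q.eval α = true := by
      simpa [BATerm.eval] using hα
    refine closure.step (H := exch (OLet S Ω) ∪ contr'Hyp S Ω) (Or.inr ⟨α, rfl⟩) hD ?_ rfl
    rintro _ ⟨_, rfl, _, rfl, rfl⟩
    exact hf _ ⟨_, (obsR_inr_lang S Ω p _).2 ⟨α, hp, rfl⟩, _,
      (obsR_inr_lang S Ω q _).2 ⟨α, hq, rfl⟩, rfl⟩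
  · obtain ⟨rfl, rfl⟩ := Prod.mk.inj h
    intro U hU
    exact closure.step (H := exch (OLet S Ω) ∪ contr'Hyp S Ω)
      (Or.inl ⟨_, _, _, _, rfl⟩) hD hf hU
  · obtain ⟨rfl, rfl⟩ := Prod.mk.inj h
    intro U hU
    exact hU.elim
  · obtain ⟨rfl, rfl⟩ := Prod.mk.inj h
    intro U hU
    obtain ⟨α, hα, rfl⟩ := (obsR_inr_lang S Ω _ U).1 hU
    simp [BATerm.eval] at hα
  · obtain ⟨rfl, rfl⟩ := Prod.mk.inj h
    intro U hU
    refine hf U ((obsR_inr_lang S Ω _ U).2 ?_)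
    rcases hU with hU | hU
    · obtain ⟨α, hα, rfl⟩ := (obsR_inr_lang S Ω _ U).1 hU
      exact ⟨α, by simp [BATerm.eval, hα], rfl⟩
    · obtain ⟨α, hα, rfl⟩ := (obsR_inr_lang S Ω _ U).1 hU
      exact ⟨α, by simp [BATerm.eval, hα], rfl⟩
  · obtain ⟨rfl, rfl⟩ := Prod.mk.inj h
    intro U hU
    obtain ⟨α, hα, rfl⟩ := (obsR_inr_lang S Ω _ U).1 hU
    refine hf _ ?_
    rcases (by simpa [BATerm.eval] using hα : p.eval α = true ∨ q.eval α = true) with h | h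
    · exact Or.inl ((obsR_inr_lang S Ω _ _).2 ⟨α, h, rfl⟩)
    · exact Or.inr ((obsR_inr_lang S Ω _ _).2 ⟨α, h, rfl⟩)

theorem obs_implies [Fintype Ω] :
    Implies (obsHyp S Ω) (exch (OLet S Ω) ∪ contr'Hyp S Ω) := by
  rintro ⟨e, f⟩ (h | ⟨α, h⟩)
  · exact CongH.hyp (Or.inl (Or.inr h))
  · obtain ⟨rfl, rfl⟩ := Prod.mk.inj h
    have h1 : CongH (obsHyp S Ω) (.var (Sum.inr (atomTerm α)))
        (.var (Sum.inr (.and (atomTerm α) (atomTerm α)))) := by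
      refine obs_bool S Ω (LQ.mk_eq.1 ?_)
      rw [LQ.mk_inf, inf_idem]
    exact (CongH.addCong h1 (.refl _)).trans
      (CongH.hyp (Or.inl (Or.inl (Or.inr ⟨_, _, rfl⟩))))

end Obs

/-- **`obs` reduces to `exch ∪ contr'`**: the homomorphic extension of the letter map
`obsR` is a reduction from `obs` to `exch ∪ contr'`. -/
theorem obs_reduces_to_exch_contr' (S Ω : Type) [Fintype Ω] [DecidableEq Ω] :
    IsReduction (obsHyp S Ω) (exch (OLet S Ω) ∪ contr'Hyp S Ω) (rTerm (obsR S Ω)) := by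
  refine ⟨obs_implies S Ω, obs_equiv S Ω, fun e f h => ?_⟩
  exact Set.Subset.antisymm
    (reify (obsR_lang S Ω) (obs_hyps S Ω) e f h.subset)
    (reify (obsR_lang S Ω) (obs_hyps S Ω) f e h.symm.subset)

end CKAH
end

section
/- Characterisation of exch-closure: for L ⊆ SP and U ∈ SP, U ∈ cl_exch(L) if and only if there exists V ∈ L such that U ⊑^sp V. -/
namespace CKAH

/-! ### Proof -/

theorem mk_eq_of {A : Type} {u v : LPoset A} (g : u.carrier → v.carrier)
    (hs : Function.Surjective g) (hle : ∀ x y, g x ≤ g y ↔ x ≤ y)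
    (hl : ∀ x, v.lab (g x) = u.lab x) : (⟦u⟧ : Pomset A) = ⟦v⟧ := by
  have hi : Function.Injective g := fun x y h =>
    le_antisymm ((hle x y).1 h.le) ((hle y x).1 h.ge)
  exact Quotient.sound ⟨⟨Equiv.ofBijective g ⟨hi, hs⟩, fun {a b} => hle a b⟩, hl⟩

abbrev NoStar {A : Type} (C : Pomset (Option A)) : Prop := C.Over {x | x ≠ none}

section le
variable {A : Type} (u v : LPoset A) (c : LPoset (Option A))

def sl (x : u.carrier) : (u.seqL v).carrier := toLex (Sum.inl x)
def sr (x : v.carrier) : (u.seqL v).carrier := toLex (Sum.inr x)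
def pl (x : u.carrier) : (u.parL v).carrier := Sum.inl x
def pr (x : v.carrier) : (u.parL v).carrier := Sum.inr x
def il (x : c.carrier) (h : c.lab x ≠ none) : (c.insL u).carrier := Sum.inl ⟨x, h⟩
def ir (x : u.carrier) : (c.insL u).carrier := Sum.inr x

variable {u v c}

theorem seq_cases (x : (u.seqL v).carrier) : (∃ y, x = sl u v y) ∨ ∃ y, x = sr u v y := by
  rcases x with x | x
  · exact Or.inl ⟨x, rfl⟩
  · exact Or.inr ⟨x, rfl⟩
theorem par_cases (x : (u.parL v).carrier) : (∃ y, x = pl u v y) ∨ ∃ y, x = pr u v y := by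
  rcases x with x | x
  · exact Or.inl ⟨x, rfl⟩
  · exact Or.inr ⟨x, rfl⟩
theorem ins_cases (x : (c.insL u).carrier) :
    (∃ y h, x = il u c y h) ∨ ∃ y, x = ir u c y := by
  rcases x with x | x
  · exact Or.inl ⟨x.1, x.2, rfl⟩
  · exact Or.inr ⟨x, rfl⟩

@[simp] theorem sll {x y} : sl u v x ≤ sl u v y ↔ x ≤ y := Sum.Lex.inl_le_inl_iff
@[simp] theorem srr {x y} : sr u v x ≤ sr u v y ↔ x ≤ y := Sum.Lex.inr_le_inr_iff
@[simp] theorem slr {x y} : sl u v x ≤ sr u v y := Sum.Lex.inl_le_inr _ _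
@[simp] theorem srl {x y} : ¬ sr u v x ≤ sl u v y := Sum.Lex.not_inr_le_inl
@[simp] theorem pll {x y} : pl u v x ≤ pl u v y ↔ x ≤ y := Sum.inl_le_inl_iff
@[simp] theorem prr {x y} : pr u v x ≤ pr u v y ↔ x ≤ y := Sum.inr_le_inr_iff
@[simp] theorem plr {x y} : ¬ pl u v x ≤ pr u v y := Sum.not_inl_le_inr
@[simp] theorem prl {x y} : ¬ pr u v x ≤ pl u v y := Sum.not_inr_le_inl
@[simp] theorem ill {x y h h'} : il u c x h ≤ il u c y h' ↔ x ≤ y := Iff.rfl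
@[simp] theorem irr {x y} : ir u c x ≤ ir u c y ↔ x ≤ y := Iff.rfl
@[simp] theorem ilr {x y h} : il u c x h ≤ ir u c y ↔
    c.uniqueStarL ∧ ∃ s, c.lab s = none ∧ x ≤ s := Iff.rfl
@[simp] theorem irl {x y h} : ir u c x ≤ il u c y h ↔
    c.uniqueStarL ∧ ∃ s, c.lab s = none ∧ s ≤ y := Iff.rfl
@[simp] theorem lab_sl {x} : (u.seqL v).lab (sl u v x) = u.lab x := rfl
@[simp] theorem lab_sr {x} : (u.seqL v).lab (sr u v x) = v.lab x := rfl
@[simp] theorem lab_pl {x} : (u.parL v).lab (pl u v x) = u.lab x := rfl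
@[simp] theorem lab_pr {x} : (u.parL v).lab (pr u v x) = v.lab x := rfl
@[simp] theorem lab_il {x h} : (c.insL u).lab (il u c x h) =
    (c.lab x).get (Option.isSome_iff_ne_none.mpr h) := rfl
@[simp] theorem lab_ir {x} : (c.insL u).lab (ir u c x) = u.lab x := rfl

theorem seq_ex {p : (u.seqL v).carrier → Prop} :
    (∃ x, p x) ↔ (∃ x, p (sl u v x)) ∨ ∃ x, p (sr u v x) := by
  constructor
  · rintro ⟨x, hx⟩
    rcases seq_cases x with ⟨y, rfl⟩ | ⟨y, rfl⟩
    · exact Or.inl ⟨y, hx⟩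
    · exact Or.inr ⟨y, hx⟩
  · rintro (⟨x, hx⟩ | ⟨x, hx⟩) <;> exact ⟨_, hx⟩
theorem par_ex {p : (u.parL v).carrier → Prop} :
    (∃ x, p x) ↔ (∃ x, p (pl u v x)) ∨ ∃ x, p (pr u v x) := by
  constructor
  · rintro ⟨x, hx⟩
    rcases par_cases x with ⟨y, rfl⟩ | ⟨y, rfl⟩
    · exact Or.inl ⟨y, hx⟩
    · exact Or.inr ⟨y, hx⟩
  · rintro (⟨x, hx⟩ | ⟨x, hx⟩) <;> exact ⟨_, hx⟩
@[simp] theorem sl_inj {x y} : sl u v x = sl u v y ↔ x = y := by simp [le_antisymm_iff]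
@[simp] theorem sr_inj {x y} : sr u v x = sr u v y ↔ x = y := by simp [le_antisymm_iff]
@[simp] theorem pl_inj {x y} : pl u v x = pl u v y ↔ x = y := by simp [le_antisymm_iff]
@[simp] theorem pr_inj {x y} : pr u v x = pr u v y ↔ x = y := by simp [le_antisymm_iff]
@[simp] theorem sl_ne {x y} : sl u v x ≠ sr u v y := by simp [le_antisymm_iff]
@[simp] theorem sr_ne {x y} : sr u v x ≠ sl u v y := by simp [le_antisymm_iff]
@[simp] theorem pl_ne {x y} : pl u v x ≠ pr u v y := by simp [le_antisymm_iff]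
@[simp] theorem pr_ne {x y} : pr u v x ≠ pl u v y := by simp [le_antisymm_iff]
theorem seq_all {p : (u.seqL v).carrier → Prop} :
    (∀ x, p x) ↔ (∀ x, p (sl u v x)) ∧ ∀ x, p (sr u v x) := by
  have := seq_ex (u := u) (v := v) (p := fun x => ¬ p x)
  grind
theorem par_all {p : (u.parL v).carrier → Prop} :
    (∀ x, p x) ↔ (∀ x, p (pl u v x)) ∧ ∀ x, p (pr u v x) := by
  have := par_ex (u := u) (v := v) (p := fun x => ¬ p x)
  grind
end le

section star
variable {A : Type} {c d : LPoset (Option A)}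
theorem uniq_seq : (c.seqL d).uniqueStarL ↔
    (c.uniqueStarL ∧ ∀ x, d.lab x ≠ none) ∨ ((∀ x, c.lab x ≠ none) ∧ d.uniqueStarL) := by
  unfold LPoset.uniqueStarL ExistsUnique
  simp only [seq_ex, seq_all, lab_sl, lab_sr, sl_inj, sr_inj, sl_ne, sr_ne]
  grind
theorem uniq_par : (c.parL d).uniqueStarL ↔
    (c.uniqueStarL ∧ ∀ x, d.lab x ≠ none) ∨ ((∀ x, c.lab x ≠ none) ∧ d.uniqueStarL) := by
  unfold LPoset.uniqueStarL ExistsUnique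
  simp only [par_ex, par_all, lab_pl, lab_pr, pl_inj, pr_inj, pl_ne, pr_ne]
  grind
end star

section pom
variable {A : Type} {C D : Pomset (Option A)}

theorem isCtx_seq : (C.seq D).IsCtx ↔ (C.IsCtx ∧ NoStar D) ∨ (NoStar C ∧ D.IsCtx) := by
  induction C using Quotient.inductionOn
  induction D using Quotient.inductionOn
  exact uniq_seq
theorem isCtx_par : (C.par D).IsCtx ↔ (C.IsCtx ∧ NoStar D) ∨ (NoStar C ∧ D.IsCtx) := by
  induction C using Quotient.inductionOn
  induction D using Quotient.inductionOn
  exact uniq_par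
theorem noStar_seq : NoStar (C.seq D) ↔ NoStar C ∧ NoStar D := by
  induction C using Quotient.inductionOn
  induction D using Quotient.inductionOn
  exact seq_all
theorem noStar_par : NoStar (C.par D) ↔ NoStar C ∧ NoStar D := by
  induction C using Quotient.inductionOn
  induction D using Quotient.inductionOn
  exact par_all

/-- The map `c[u]·d[v] → (c·d)[w]`, given maps `u → w`, `v → w`. -/
def gs (c d : LPoset (Option A)) (u v w : LPoset A) (f : u.carrier → w.carrier)
    (g : v.carrier → w.carrier) :
    ((c.insL u).seqL (d.insL v)).carrier → ((c.seqL d).insL w).carrier :=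
  fun x => Sum.elim
    (fun y : (c.insL u).carrier => Sum.elim (fun z => il w (c.seqL d) (sl c d z.1) z.2)
      (fun z => ir w (c.seqL d) (f z)) y)
    (fun y : (d.insL v).carrier => Sum.elim (fun z => il w (c.seqL d) (sr c d z.1) z.2)
      (fun z => ir w (c.seqL d) (g z)) y) (ofLex x)

def gp (c d : LPoset (Option A)) (u v w : LPoset A) (f : u.carrier → w.carrier)
    (g : v.carrier → w.carrier) :
    ((c.insL u).parL (d.insL v)).carrier → ((c.parL d).insL w).carrier :=
  fun x => Sum.elim
    (fun y : (c.insL u).carrier => Sum.elim (fun z => il w (c.parL d) (pl c d z.1) z.2)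
      (fun z => ir w (c.parL d) (f z)) y)
    (fun y : (d.insL v).carrier => Sum.elim (fun z => il w (c.parL d) (pr c d z.1) z.2)
      (fun z => ir w (c.parL d) (g z)) y) x

section g
variable {c d : LPoset (Option A)} {u v w : LPoset A} {f : u.carrier → w.carrier}
    {g : v.carrier → w.carrier}
theorem sl_nn {x} (h : c.lab x ≠ none) : (c.seqL d).lab (sl c d x) ≠ none := h
theorem sr_nn {x} (h : d.lab x ≠ none) : (c.seqL d).lab (sr c d x) ≠ none := h
theorem pl_nn {x} (h : c.lab x ≠ none) : (c.parL d).lab (pl c d x) ≠ none := h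
theorem pr_nn {x} (h : d.lab x ≠ none) : (c.parL d).lab (pr c d x) ≠ none := h
@[simp] theorem gs1 {x h} : gs c d u v w f g (sl _ _ (il _ _ x h)) = il _ _ (sl c d x) (sl_nn h) := rfl
@[simp] theorem gs2 {x h} : gs c d u v w f g (sr _ _ (il _ _ x h)) = il _ _ (sr c d x) (sr_nn h) := rfl
@[simp] theorem gs3 {x} : gs c d u v w f g (sl _ _ (ir _ _ x)) = ir _ _ (f x) := rfl
@[simp] theorem gs4 {x} : gs c d u v w f g (sr _ _ (ir _ _ x)) = ir _ _ (g x) := rfl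
@[simp] theorem gp1 {x h} : gp c d u v w f g (pl _ _ (il _ _ x h)) = il _ _ (pl c d x) (pl_nn h) := rfl
@[simp] theorem gp2 {x h} : gp c d u v w f g (pr _ _ (il _ _ x h)) = il _ _ (pr c d x) (pr_nn h) := rfl
@[simp] theorem gp3 {x} : gp c d u v w f g (pl _ _ (ir _ _ x)) = ir _ _ (f x) := rfl
@[simp] theorem gp4 {x} : gp c d u v w f g (pr _ _ (ir _ _ x)) = ir _ _ (g x) := rfl

theorem gs_eq (hfg : ∀ z, (∃ x, f x = z) ∨ ∃ y, g y = z)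
    (hf : ∀ x y, f x ≤ f y ↔ x ≤ y) (hg : ∀ x y, g x ≤ g y ↔ x ≤ y)
    (hfl : ∀ x, w.lab (f x) = u.lab x) (hgl : ∀ x, w.lab (g x) = v.lab x)
    (h1 : ∀ _ : u.carrier, c.uniqueStarL ∧ (∀ x, d.lab x ≠ none) ∧ IsEmpty v.carrier)
    (h2 : ∀ _ : v.carrier, d.uniqueStarL ∧ (∀ x, c.lab x ≠ none) ∧ IsEmpty u.carrier) :
    (⟦(c.insL u).seqL (d.insL v)⟧ : Pomset A) = ⟦(c.seqL d).insL w⟧ := by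
  refine mk_eq_of (gs c d u v w f g) ?_ ?_ ?_
  · intro z
    rcases ins_cases z with ⟨z, h, rfl⟩ | ⟨z, rfl⟩
    · rcases seq_cases z with ⟨z, rfl⟩ | ⟨z, rfl⟩
      · exact ⟨sl _ _ (il _ _ z h), rfl⟩
      · exact ⟨sr _ _ (il _ _ z h), rfl⟩
    · rcases hfg z with ⟨z, rfl⟩ | ⟨z, rfl⟩
      · exact ⟨sl _ _ (ir _ _ z), rfl⟩
      · exact ⟨sr _ _ (ir _ _ z), rfl⟩
  · intro x y
    rcases seq_cases x with ⟨x, rfl⟩ | ⟨x, rfl⟩ <;>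
    rcases ins_cases x with ⟨x, hx, rfl⟩ | ⟨x, rfl⟩ <;>
    rcases seq_cases y with ⟨y, rfl⟩ | ⟨y, rfl⟩ <;>
    rcases ins_cases y with ⟨y, hy, rfl⟩ | ⟨y, rfl⟩ <;>
    simp only [gs1, gs2, gs3, gs4, sll, srr, slr, srl, ill, ilr, irl, irr, uniq_seq, seq_ex,
      lab_sl, lab_sr, hf, hg]
    all_goals try have hx1 := h1 x
    all_goals try have hx2 := h2 x
    all_goals try have hy1 := h1 y
    all_goals try have hy2 := h2 y
    all_goals try exact (hx1.2.2.false y).elim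
    all_goals try exact (hx2.2.2.false y).elim
    all_goals
      have e1 : c.uniqueStarL → ∃ s, c.lab s = none := fun h => h.exists
      have e2 : d.uniqueStarL → ∃ s, d.lab s = none := fun h => h.exists
      grind
  · intro x
    rcases seq_cases x with ⟨x, rfl⟩ | ⟨x, rfl⟩ <;>
    rcases ins_cases x with ⟨x, hx, rfl⟩ | ⟨x, rfl⟩ <;>
    simp [hfl, hgl]

theorem gp_eq (hfg : ∀ z, (∃ x, f x = z) ∨ ∃ y, g y = z)
    (hf : ∀ x y, f x ≤ f y ↔ x ≤ y) (hg : ∀ x y, g x ≤ g y ↔ x ≤ y)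
    (hfl : ∀ x, w.lab (f x) = u.lab x) (hgl : ∀ x, w.lab (g x) = v.lab x)
    (h1 : ∀ _ : u.carrier, c.uniqueStarL ∧ (∀ x, d.lab x ≠ none) ∧ IsEmpty v.carrier)
    (h2 : ∀ _ : v.carrier, d.uniqueStarL ∧ (∀ x, c.lab x ≠ none) ∧ IsEmpty u.carrier) :
    (⟦(c.insL u).parL (d.insL v)⟧ : Pomset A) = ⟦(c.parL d).insL w⟧ := by
  refine mk_eq_of (gp c d u v w f g) ?_ ?_ ?_
  · intro z
    rcases ins_cases z with ⟨z, h, rfl⟩ | ⟨z, rfl⟩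
    · rcases par_cases z with ⟨z, rfl⟩ | ⟨z, rfl⟩
      · exact ⟨pl _ _ (il _ _ z h), rfl⟩
      · exact ⟨pr _ _ (il _ _ z h), rfl⟩
    · rcases hfg z with ⟨z, rfl⟩ | ⟨z, rfl⟩
      · exact ⟨pl _ _ (ir _ _ z), rfl⟩
      · exact ⟨pr _ _ (ir _ _ z), rfl⟩
  · intro x y
    rcases par_cases x with ⟨x, rfl⟩ | ⟨x, rfl⟩ <;>
    rcases ins_cases x with ⟨x, hx, rfl⟩ | ⟨x, rfl⟩ <;>
    rcases par_cases y with ⟨y, rfl⟩ | ⟨y, rfl⟩ <;>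
    rcases ins_cases y with ⟨y, hy, rfl⟩ | ⟨y, rfl⟩ <;>
    simp only [gp1, gp2, gp3, gp4, pll, prr, plr, prl, ill, ilr, irl, irr, uniq_par, par_ex,
      lab_pl, lab_pr, hf, hg]
    all_goals try have hx1 := h1 x
    all_goals try have hx2 := h2 x
    all_goals try have hy1 := h1 y
    all_goals try have hy2 := h2 y
    all_goals try exact (hx1.2.2.false y).elim
    all_goals try exact (hx2.2.2.false y).elim
    all_goals
      have e1 : c.uniqueStarL → ∃ s, c.lab s = none := fun h => h.exists
      have e2 : d.uniqueStarL → ∃ s, d.lab s = none := fun h => h.exists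
      grind
  · intro x
    rcases par_cases x with ⟨x, rfl⟩ | ⟨x, rfl⟩ <;>
    rcases ins_cases x with ⟨x, hx, rfl⟩ | ⟨x, rfl⟩ <;>
    simp [hfl, hgl]
end g

theorem ins_seq_l (hC : C.IsCtx) (hD : NoStar D) (U : Pomset A) :
    (C.seq D).ins U = (C.ins U).seq (D.ins (Pomset.empty A)) := by
  induction C using Quotient.inductionOn
  induction D using Quotient.inductionOn
  induction U using Quotient.inductionOn
  exact (gs_eq (v := LPoset.emptyL A) (f := id) (g := fun x => x.elim0)
    (fun z => Or.inl ⟨z, rfl⟩) (fun _ _ => Iff.rfl) (fun x => x.elim0) (fun _ => rfl)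
    (fun x => x.elim0) (fun _ => ⟨hC, hD, Fin.isEmpty⟩) (fun x => x.elim0)).symm

theorem ins_seq_r (hC : NoStar C) (hD : D.IsCtx) (U : Pomset A) :
    (C.seq D).ins U = (C.ins (Pomset.empty A)).seq (D.ins U) := by
  induction C using Quotient.inductionOn
  induction D using Quotient.inductionOn
  induction U using Quotient.inductionOn
  exact (gs_eq (u := LPoset.emptyL A) (g := id) (f := fun x => x.elim0)
    (fun z => Or.inr ⟨z, rfl⟩) (fun x => x.elim0) (fun _ _ => Iff.rfl) (fun x => x.elim0)
    (fun _ => rfl) (fun x => x.elim0) (fun _ => ⟨hD, hC, Fin.isEmpty⟩)).symm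

theorem ins_seq_e (C D : Pomset (Option A)) : (C.seq D).ins (Pomset.empty A) =
    (C.ins (Pomset.empty A)).seq (D.ins (Pomset.empty A)) := by
  induction C using Quotient.inductionOn
  induction D using Quotient.inductionOn
  exact (gs_eq (u := LPoset.emptyL A) (v := LPoset.emptyL A) (w := LPoset.emptyL A)
    (g := fun x => x.elim0) (f := fun x => x.elim0)
    (fun x => x.elim0) (fun x => x.elim0) (fun x => x.elim0) (fun x => x.elim0)
    (fun x => x.elim0) (fun x => x.elim0) (fun x => x.elim0)).symm

theorem ins_par_l (hC : C.IsCtx) (hD : NoStar D) (U : Pomset A) :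
    (C.par D).ins U = (C.ins U).par (D.ins (Pomset.empty A)) := by
  induction C using Quotient.inductionOn
  induction D using Quotient.inductionOn
  induction U using Quotient.inductionOn
  exact (gp_eq (v := LPoset.emptyL A) (f := id) (g := fun x => x.elim0)
    (fun z => Or.inl ⟨z, rfl⟩) (fun _ _ => Iff.rfl) (fun x => x.elim0) (fun _ => rfl)
    (fun x => x.elim0) (fun _ => ⟨hC, hD, Fin.isEmpty⟩) (fun x => x.elim0)).symm

theorem ins_par_r (hC : NoStar C) (hD : D.IsCtx) (U : Pomset A) :
    (C.par D).ins U = (C.ins (Pomset.empty A)).par (D.ins U) := by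
  induction C using Quotient.inductionOn
  induction D using Quotient.inductionOn
  induction U using Quotient.inductionOn
  exact (gp_eq (u := LPoset.emptyL A) (g := id) (f := fun x => x.elim0)
    (fun z => Or.inr ⟨z, rfl⟩) (fun x => x.elim0) (fun _ _ => Iff.rfl) (fun x => x.elim0)
    (fun _ => rfl) (fun x => x.elim0) (fun _ => ⟨hD, hC, Fin.isEmpty⟩)).symm

theorem ins_par_e (C D : Pomset (Option A)) : (C.par D).ins (Pomset.empty A) =
    (C.ins (Pomset.empty A)).par (D.ins (Pomset.empty A)) := by
  induction C using Quotient.inductionOn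
  induction D using Quotient.inductionOn
  exact (gp_eq (u := LPoset.emptyL A) (v := LPoset.emptyL A) (w := LPoset.emptyL A)
    (g := fun x => x.elim0) (f := fun x => x.elim0)
    (fun x => x.elim0) (fun x => x.elim0) (fun x => x.elim0) (fun x => x.elim0)
    (fun x => x.elim0) (fun x => x.elim0) (fun x => x.elim0)).symm

theorem ins_star (U : Pomset A) : (Pomset.single (none : Option A)).ins U = U := by
  induction U using Quotient.inductionOn with | _ u =>
  refine (mk_eq_of (ir u (LPoset.singleL none)) ?_ (fun _ _ => Iff.rfl) (fun _ => rfl)).symm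
  intro z
  rcases ins_cases z with ⟨z, h, rfl⟩ | ⟨z, rfl⟩
  · exact (h rfl).elim
  · exact ⟨z, rfl⟩

theorem ins_some (a : A) : (Pomset.single (some a)).ins (Pomset.empty A) = Pomset.single a := by
  refine (mk_eq_of (u := LPoset.singleL a)
    (fun _ => il (LPoset.emptyL A) (LPoset.singleL (some a)) PUnit.unit (Option.some_ne_none a))
    ?_ (fun _ _ => Iff.rfl) (fun _ => rfl)).symm
  intro z
  rcases ins_cases z with ⟨z, h, rfl⟩ | ⟨z, rfl⟩
  · exact ⟨PUnit.unit, rfl⟩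
  · exact z.elim0

theorem ins_empty : (Pomset.empty (Option A)).ins (Pomset.empty A) = Pomset.empty A := by
  refine (mk_eq_of (u := LPoset.emptyL A) (fun x => x.elim0)
    ?_ (fun x => x.elim0) (fun x => x.elim0)).symm
  intro z
  rcases ins_cases z with ⟨z, h, rfl⟩ | ⟨z, rfl⟩
  · exact z.elim0
  · exact z.elim0

theorem sp_strip (hC : C.IsSP) : (C.ins (Pomset.empty A)).IsSP := by
  induction hC with
  | empty => rw [ins_empty]; exact .empty
  | single a =>
    cases a with
    | none => rw [ins_star]; exact .empty
    | some a => rw [ins_some]; exact .single a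
  | seq _ _ h1 h2 => rw [ins_seq_e]; exact .seq h1 h2
  | par _ _ h1 h2 => rw [ins_par_e]; exact .par h1 h2

theorem spSub_ins (hC : C.IsSP) (hc : C.IsCtx) {U V : Pomset A} (h : spSub U V) :
    spSub (C.ins U) (C.ins V) := by
  induction hC with
  | empty => obtain ⟨x, -⟩ := hc; exact x.elim0
  | single a =>
    cases a with
    | none => rw [ins_star, ins_star]; exact h
    | some a => obtain ⟨x, hx, -⟩ := hc; exact absurd hx (Option.some_ne_none a)
  | seq s1 s2 h1 h2 =>
    rcases isCtx_seq.1 hc with ⟨a, b⟩ | ⟨a, b⟩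
    · rw [ins_seq_l a b, ins_seq_l a b]; exact .seqCong (h1 a) (.refl (sp_strip s2))
    · rw [ins_seq_r a b, ins_seq_r a b]; exact .seqCong (.refl (sp_strip s1)) (h2 b)
  | par s1 s2 h1 h2 =>
    rcases isCtx_par.1 hc with ⟨a, b⟩ | ⟨a, b⟩
    · rw [ins_par_l a b, ins_par_l a b]; exact .parCong (h1 a) (.refl (sp_strip s2))
    · rw [ins_par_r a b, ins_par_r a b]; exact .parCong (.refl (sp_strip s1)) (h2 b)

theorem pow_sp {L : Lang A} (h : L ⊆ SPset A) (n : ℕ) : L.pow n ⊆ SPset A := by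
  induction n with
  | zero => rintro _ rfl; exact Pomset.IsSP.empty
  | succ n ih => rintro _ ⟨U, hU, V, hV, rfl⟩; exact Pomset.IsSP.seq (ih hU) (h hV)

theorem lang_sp (e : Term A) : e.lang ⊆ SPset A := by
  induction e with
  | zero => exact Set.empty_subset _
  | one => rintro _ rfl; exact Pomset.IsSP.empty
  | var a => rintro _ rfl; exact Pomset.IsSP.single a
  | add e f h1 h2 => exact Set.union_subset h1 h2
  | seq e f h1 h2 => rintro _ ⟨U, hU, V, hV, rfl⟩; exact Pomset.IsSP.seq (h1 hU) (h2 hV)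
  | par e f h1 h2 => rintro _ ⟨U, hU, V, hV, rfl⟩; exact Pomset.IsSP.par (h1 hU) (h2 hV)
  | star e h => exact Set.iUnion_subset (pow_sp h)

theorem exists_term {U : Pomset A} (h : U.IsSP) : ∃ e : Term A, e.lang = {U} := by
  induction h with
  | empty => exact ⟨.one, rfl⟩
  | single a => exact ⟨.var a, rfl⟩
  | seq _ _ h1 h2 =>
    obtain ⟨e, he⟩ := h1
    obtain ⟨f, hf⟩ := h2
    exact ⟨.seq e f, by ext; simp [Term.lang, Lang.seq, he, hf]⟩
  | par _ _ h1 h2 =>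
    obtain ⟨e, he⟩ := h1
    obtain ⟨f, hf⟩ := h2
    exact ⟨.par e f, by ext; simp [Term.lang, Lang.par, he, hf]⟩

theorem exists_lift {U : Pomset A} (h : U.IsSP) :
    ∃ D : Pomset (Option A), D.IsSP ∧ NoStar D ∧ D.ins (Pomset.empty A) = U := by
  induction h with
  | empty => exact ⟨_, .empty, fun x => x.elim0, ins_empty⟩
  | single a => exact ⟨_, .single (some a), fun _ => Option.some_ne_none a, ins_some a⟩
  | seq _ _ h1 h2 =>
    obtain ⟨C, a, b, rfl⟩ := h1
    obtain ⟨D, a', b', rfl⟩ := h2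
    exact ⟨C.seq D, .seq a a', noStar_seq.2 ⟨b, b'⟩, ins_seq_e _ _⟩
  | par _ _ h1 h2 =>
    obtain ⟨C, a, b, rfl⟩ := h1
    obtain ⟨D, a', b', rfl⟩ := h2
    exact ⟨C.par D, .par a a', noStar_par.2 ⟨b, b'⟩, ins_par_e _ _⟩

/-- Functions on pomsets given by series-parallel contexts. -/
inductive SPFun : (Pomset A → Pomset A) → Prop
  | id : SPFun fun X => X
  | seqL {F} {W : Pomset A} : SPFun F → W.IsSP → SPFun fun X => W.seq (F X)
  | seqR {F} {W : Pomset A} : SPFun F → W.IsSP → SPFun fun X => (F X).seq W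
  | parL {F} {W : Pomset A} : SPFun F → W.IsSP → SPFun fun X => W.par (F X)
  | parR {F} {W : Pomset A} : SPFun F → W.IsSP → SPFun fun X => (F X).par W

theorem SPFun.comp {F G : Pomset A → Pomset A} (hF : SPFun F) (hG : SPFun G) :
    SPFun fun X => F (G X) := by
  induction hF with
  | id => exact hG
  | seqL _ h ih => exact .seqL ih h
  | seqR _ h ih => exact .seqR ih h
  | parL _ h ih => exact .parL ih h
  | parR _ h ih => exact .parR ih h

theorem SPFun.ctx {F : Pomset A → Pomset A} (hF : SPFun F) :
    ∃ C : Pomset (Option A), C.IsSPCtx ∧ ∀ U, C.ins U = F U := by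
  induction hF with
  | id => exact ⟨starCtx A, ⟨⟨PUnit.unit, rfl, fun _ _ => rfl⟩, .single none⟩, ins_star⟩
  | seqL _ h ih =>
    obtain ⟨C, ⟨hc, hs⟩, e⟩ := ih
    obtain ⟨D, ds, dn, rfl⟩ := exists_lift h
    exact ⟨D.seq C, ⟨isCtx_seq.2 (Or.inr ⟨dn, hc⟩), .seq ds hs⟩,
      fun U => by rw [ins_seq_r dn hc, e]⟩
  | seqR _ h ih =>
    obtain ⟨C, ⟨hc, hs⟩, e⟩ := ih
    obtain ⟨D, ds, dn, rfl⟩ := exists_lift h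
    exact ⟨C.seq D, ⟨isCtx_seq.2 (Or.inl ⟨hc, dn⟩), .seq hs ds⟩,
      fun U => by rw [ins_seq_l hc dn, e]⟩
  | parL _ h ih =>
    obtain ⟨C, ⟨hc, hs⟩, e⟩ := ih
    obtain ⟨D, ds, dn, rfl⟩ := exists_lift h
    exact ⟨D.par C, ⟨isCtx_par.2 (Or.inr ⟨dn, hc⟩), .par ds hs⟩,
      fun U => by rw [ins_par_r dn hc, e]⟩
  | parR _ h ih =>
    obtain ⟨C, ⟨hc, hs⟩, e⟩ := ih
    obtain ⟨D, ds, dn, rfl⟩ := exists_lift h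
    exact ⟨C.par D, ⟨isCtx_par.2 (Or.inl ⟨hc, dn⟩), .par hs ds⟩,
      fun U => by rw [ins_par_l hc dn, e]⟩

theorem spSub_sp {U V : Pomset A} (h : spSub U V) : U.IsSP ∧ V.IsSP := by
  induction h with
  | refl h => exact ⟨h, h⟩
  | trans _ _ h1 h2 => exact ⟨h1.1, h2.2⟩
  | seqCong _ _ h1 h2 => exact ⟨.seq h1.1 h2.1, .seq h1.2 h2.2⟩
  | parCong _ _ h1 h2 => exact ⟨.par h1.1 h2.1, .par h1.2 h2.2⟩
  | exch a b c d => exact ⟨.seq (.par a b) (.par c d), .par (.seq a c) (.seq b d)⟩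

theorem spSub_closure {L : Lang A} {U V : Pomset A} (h : spSub U V) :
    ∀ {F : Pomset A → Pomset A}, SPFun F → closure (exch A) L (F V) → closure (exch A) L (F U) := by
  induction h with
  | refl _ => exact fun _ h => h
  | trans _ _ h1 h2 => exact fun hF h => h1 hF (h2 hF h)
  | seqCong a b h1 h2 =>
    exact fun hF h => h2 (hF.comp (.seqL .id (spSub_sp a).1))
      (h1 (hF.comp (.seqR .id (spSub_sp b).2)) h)
  | parCong a b h1 h2 =>
    exact fun hF h => h2 (hF.comp (.parL .id (spSub_sp a).1))
      (h1 (hF.comp (.parR .id (spSub_sp b).2)) h)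
  | exch a b c d =>
    intro F hF h
    obtain ⟨C, hC, hCF⟩ := hF.ctx
    obtain ⟨e, he⟩ := exists_term a
    obtain ⟨f, hf⟩ := exists_term b
    obtain ⟨g, hg⟩ := exists_term c
    obtain ⟨k, hk⟩ := exists_term d
    rw [← hCF] at h ⊢
    have hm : (Term.seq (.par e f) (.par g k), Term.par (.seq e g) (.seq f k)) ∈ CKAH.exch A :=
      ⟨e, f, g, k, rfl⟩
    refine closure.step hm hC ?_ ?_
    · intro W hW
      simp only [Term.lang, Lang.seq, Lang.par, he, hf, hg, hk] at hW
      obtain ⟨_, ⟨_, rfl, _, rfl, rfl⟩, _, ⟨_, rfl, _, rfl, rfl⟩, rfl⟩ := hW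
      exact h
    · simp only [Term.lang, Lang.seq, Lang.par, he, hf, hg, hk]
      exact ⟨_, ⟨_, rfl, _, rfl, rfl⟩, _, ⟨_, rfl, _, rfl, rfl⟩, rfl⟩

end pom

/-- **Characterisation of the `exch`-closure**: for `L ⊆ SP` and `U ∈ SP`,
`U ∈ cl_exch(L)` iff `U ⊑^sp V` for some `V ∈ L`. -/
theorem exch_closure_vs_subsumption (A : Type) (L : Lang A) (hL : L ⊆ SPset A)
    (U : Pomset A) (hU : U.IsSP) :
    U ∈ cl (exch A) L ↔ ∃ V ∈ L, spSub U V := by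
  constructor
  · intro h
    clear hU
    change closure (exch A) L U at h
    induction h with
    | base h => exact ⟨_, h, .refl (hL h)⟩
    | step hef hC hf hU ih =>
      obtain ⟨e, f, g, k, hp⟩ := hef
      obtain ⟨rfl, rfl⟩ := Prod.mk.inj hp
      obtain ⟨_, ⟨U1, h1, U2, h2, rfl⟩, _, ⟨U3, h3, U4, h4, rfl⟩, rfl⟩ := hU
      obtain ⟨V, hV, hs⟩ := ih ((U1.seq U3).par (U2.seq U4))
        ⟨_, ⟨U1, h1, U3, h3, rfl⟩, _, ⟨U2, h2, U4, h4, rfl⟩, rfl⟩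
      exact ⟨V, hV, .trans (spSub_ins hC.2 hC.1
        (.exch (lang_sp _ h1) (lang_sp _ h2) (lang_sp _ h3) (lang_sp _ h4))) hs⟩
  · rintro ⟨V, hV, hs⟩
    exact spSub_closure hs .id (.base hV)

end CKAH
end
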